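/- arXiv:2603.21538 — 2 statements merged into one kernel-verified Lean document; each statement's English description precedes it below -/
import Mathlib

section
/- Let H be one of the graphs house, hammer, let 𝒞 be the class of (bull, H)-free graphs, let 𝒢 be a hereditary class of graphs, and let ℋ be the class of triangle-free graphs. Then every graph in 𝒢 ∩ 𝒞 is perfectly weight divisible if and only if every graph in 𝒢 ∩ ℋ is perfectly weight divisible. -/
/-!
Bull, house and hammer all contain a triangle, so the triangle-free members of the hereditary class
are (bull, H)-free, which gives one implication.

For the converse, argue by induction on the number of vertices of a member `G` with a triangle.

*Homogeneous sets.* If `G` has a homogeneous set `X` (at least two vertices, not all, and no outside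
vertex mixed on `X`), both `X` and the graph where `X` is shrunk to a single vertex `x₀`, whose
weight is the maximum weight of a clique of `X`, satisfy the claim by induction, and
`divOn_of_homogeneous` combines their partitions. When `x₀` lies in the perfect part, it is replaced
by the perfect part of `X`; that the result is perfect is the substitution lemma
(`PerfOn.substitute`), proved through weighted colourings of perfect graphs (`PerfOn.weighted`).

*Prime graphs.* If `G` has no homogeneous set, it has a vertex `v` whose non-neighbours form a
clique (`exists_clique_antiNbhd`). Then `v` and its non-neighbours induce a perfect graph, and `v`
increases the weight of each clique among its neighbours, so the partition into non-neighbours and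
neighbours of `v` works (`divOn_of_clique_antiNbhd`).

The vertex is found in the complement `F = Gᶜ`, which is prime, bull-free (the bull is
self-complementary), has a stable set of size three, and excludes the path on five vertices or the
banner. There, `exists_copaw` gives a vertex `q` for which some component `K` of the
non-neighbourhood is not a clique, and the neighbourhood of `q` turns out to be stable. Its vertices
are complete, mixed or anticomplete to `K`. By primality some mixed vertices exist, and a complete
vertex would lead to a homogeneous set around `q` (`NonCliqueComp.no_complete`). An edge between two
mixed, two anticomplete, or a mixed and an anticomplete vertex spans a component of a suitable set;
a vertex outside that is mixed on it yields a bull or the excluded graph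
(`NonCliqueComp.nbhd_stable`).
The facts specific to the excluded graph are collected in `nbhd_stable_P5` and `nbhd_stable_banner`.
-/

open SimpleGraph

/-- `H` is isomorphic to an induced subgraph of `G`. -/
def ContainsInduced {α β : Type*} (G : SimpleGraph α) (H : SimpleGraph β) : Prop :=
  ∃ f : β ↪ α, ∀ a b, G.Adj (f a) (f b) ↔ H.Adj a b

/-- `G` is `H`-free: `G` does not contain `H` as an induced subgraph. -/
def IsFree {α β : Type*} (G : SimpleGraph α) (H : SimpleGraph β) : Prop :=
  ¬ ContainsInduced G H

/-- The clique number of the subgraph of `G` induced on `s`. -/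
noncomputable def cliqueNumOn {V : Type*} (G : SimpleGraph V) (s : Set V) : ℕ :=
  sSup {n | ∃ t : Finset V, ↑t ⊆ s ∧ G.IsNClique n t}

/-- The maximum `w`-weight of a clique of `G` contained in `s`. -/
noncomputable def wCliqueNumOn {V : Type*} (G : SimpleGraph V) (w : V → ℕ) (s : Set V) : ℕ :=
  sSup {n | ∃ t : Finset V, ↑t ⊆ s ∧ G.IsClique (↑t : Set V) ∧ ∑ v ∈ t, w v = n}

/-- A graph is perfect if every induced subgraph has chromatic number equal to clique number. -/
def IsPerfect {V : Type*} (G : SimpleGraph V) : Prop :=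
  ∀ s : Set V, (G.induce s).chromaticNumber = (cliqueNumOn G s : ℕ∞)

/-- `G` is perfectly divisible: every (nonempty) induced subgraph `H` of `G` admits a partition
`(A, B)` of its vertex set with `H[A]` perfect and `ω(H[B]) < ω(H)`. -/
def PerfectlyDivisible {V : Type*} (G : SimpleGraph V) : Prop :=
  ∀ s : Set V, s.Nonempty →
    ∃ A B : Set V, A ∪ B = s ∧ A ∩ B = ∅ ∧
      IsPerfect (G.induce A) ∧ cliqueNumOn G B < cliqueNumOn G s

/-- `G` is perfectly weight divisible: for every positive integer weight function `w` and every
(nonempty) induced subgraph `H` of `G`, there is a partition `(P, W)` of its vertex set with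
`H[P]` perfect and the maximum weight of a clique of `H[W]` less than that of `H`. -/
def PerfectlyWeightDivisible {V : Type*} (G : SimpleGraph V) : Prop :=
  ∀ w : V → ℕ, (∀ v, 0 < w v) →
    ∀ s : Set V, s.Nonempty →
      ∃ P W : Set V, P ∪ W = s ∧ P ∩ W = ∅ ∧
        IsPerfect (G.induce P) ∧ wCliqueNumOn G w W < wCliqueNumOn G w s

/-- The bull: a triangle `{0,1,2}` with pendant edges `0-3` and `1-4`. -/
def bull : SimpleGraph (Fin 5) :=
  SimpleGraph.fromEdgeSet {s(0,1), s(0,2), s(1,2), s(0,3), s(1,4)}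

/-- The house: the complement of the path on 5 vertices. -/
def house : SimpleGraph (Fin 5) := (SimpleGraph.pathGraph 5)ᶜ

/-- The hammer: a triangle `{0,1,2}` together with the path `2-3-4`. -/
def hammer : SimpleGraph (Fin 5) :=
  SimpleGraph.fromEdgeSet {s(0,1), s(0,2), s(1,2), s(2,3), s(3,4)}

/-- The diamond: `K₄` minus an edge. -/
def diamond : SimpleGraph (Fin 4) :=
  SimpleGraph.fromEdgeSet {s(0,1), s(0,2), s(0,3), s(1,2), s(1,3)}

/-- The odd torch built on the cycle `C_k` from a set `S` of cycle vertices: two new adjacent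
vertices are added, the first adjacent exactly to `S`, the second to no cycle vertex. -/
def oddTorch (k : ℕ) (S : Set (Fin k)) : SimpleGraph (Fin k ⊕ Fin 2) :=
  SimpleGraph.fromRel (fun a b =>
    match a, b with
    | Sum.inl i, Sum.inl j => (SimpleGraph.cycleGraph k).Adj i j
    | Sum.inl i, Sum.inr u => u = 0 ∧ i ∈ S
    | Sum.inr _, Sum.inl _ => False
    | Sum.inr u, Sum.inr v => u ≠ v)

/-- `G` contains no odd torch as an induced subgraph. -/
def OddTorchFree {V : Type*} (G : SimpleGraph V) : Prop :=
  ∀ (k : ℕ) (S : Set (Fin k)), 5 ≤ k → Odd k → S.Nonempty →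
    (∀ i ∈ S, ∀ j ∈ S, ¬ (SimpleGraph.cycleGraph k).Adj i j) →
    IsFree G (oddTorch k S)

/-- `G` is locally perfect: the neighbourhood of each vertex induces a perfect graph. -/
def LocallyPerfect {V : Type*} (G : SimpleGraph V) : Prop :=
  ∀ v : V, IsPerfect (G.induce (G.neighborSet v))

/-- `N(X)`: vertices outside `X` with a neighbour in `X`. -/
def nbhd {V : Type*} (G : SimpleGraph V) (X : Set V) : Set V :=
  {u | u ∉ X ∧ ∃ x ∈ X, G.Adj u x}

/-- `M(X) = V(G) \ (X ∪ N(X))`: vertices outside `X` with no neighbour in `X`. -/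
def antiNbhd {V : Type*} (G : SimpleGraph V) (X : Set V) : Set V :=
  {u | u ∉ X ∧ ∀ x ∈ X, ¬ G.Adj u x}

/-- Minimally non-perfectly divisible. -/
def MNPD {V : Type*} (G : SimpleGraph V) : Prop :=
  ¬ PerfectlyDivisible G ∧ ∀ s : Set V, s ≠ Set.univ → PerfectlyDivisible (G.induce s)

/-- Minimally non-perfectly weight divisible. -/
def MNWD {V : Type*} (G : SimpleGraph V) : Prop :=
  ¬ PerfectlyWeightDivisible G ∧ ∀ s : Set V, s ≠ Set.univ → PerfectlyWeightDivisible (G.induce s)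

/-! ### Prime graphs and components of a non-neighbourhood -/

/-- `K` is connected for the relation `R`: every splitting of `K` into two nonempty parts is
crossed by a related pair. Phrased with predicates, so that it can be applied directly to
adjacency to a fixed vertex. -/
def Conn {V : Type*} (R : V → V → Prop) (K : Set V) : Prop :=
  ∀ p : V → Prop, (∃ a ∈ K, p a) → (∃ b ∈ K, ¬ p b) → ∃ s ∈ K, ∃ t ∈ K, R s t ∧ p s ∧ ¬ p t

/-- The component of `x` in the part of `R` induced on `A`. -/
lemma exists_component {V : Type*} (R : V → V → Prop) (hR : ∀ a b, R a b → R b a)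
    (A : Set V) (x : V) (hx : x ∈ A) :
    ∃ K : Set V, x ∈ K ∧ K ⊆ A ∧ Conn R K ∧ ∀ k ∈ K, ∀ u ∈ A, R k u → u ∈ K := by
  let S : V → V → Prop := fun a b => R a b ∧ a ∈ A ∧ b ∈ A
  have hsub : {y | Relation.ReflTransGen S x y} ⊆ A := by
    intro y hy
    induction hy with
    | refl => exact hx
    | tail _ h _ => exact h.2.2
  refine ⟨{y | Relation.ReflTransGen S x y}, Relation.ReflTransGen.refl, hsub, ?_, ?_⟩
  · rintro p ⟨a, ha, hpa⟩ ⟨b, hb, hpb⟩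
    by_contra hcon
    push Not at hcon
    have key : ∀ y, Relation.ReflTransGen S x y → (p x ↔ p y) := by
      intro y hy
      induction hy with
      | refl => rfl
      | @tail y z hy h ih =>
        have hz : Relation.ReflTransGen S x z := hy.tail h
        exact ih.trans ⟨fun h' => hcon y hy z hz h.1 h',
          fun h' => hcon z hz y hy (hR _ _ h.1) h'⟩
    exact hpb ((key b hb).1 ((key a ha).2 hpa))
  · intro k hk u hu hku
    exact Relation.ReflTransGen.tail hk ⟨hku, hsub hk, hu⟩

/-- `F` has no homogeneous set: every set of at least two, but not all, vertices is mixed on by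
some vertex outside it. -/
def PrimeGraph {V : Type*} (F : SimpleGraph V) : Prop :=
  ∀ X : Set V, X.Nontrivial → X ≠ Set.univ →
    ∃ u, u ∉ X ∧ (∃ a ∈ X, F.Adj u a) ∧ ∃ b ∈ X, ¬ F.Adj u b

/-- No induced bull: triangle `a b c` with pendants `d` at `a` and `e` at `b`. Distinctness of the
five vertices follows from the adjacencies. -/
def NoBull {V : Type*} (F : SimpleGraph V) : Prop :=
  ∀ a b c d e, F.Adj a b → F.Adj b c → F.Adj a c → F.Adj a d → F.Adj b e →
    ¬ F.Adj a e → ¬ F.Adj b d → ¬ F.Adj c d → ¬ F.Adj c e → ¬ F.Adj d e → False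

/-- No induced path `a b c d e`. -/
def NoP5 {V : Type*} (F : SimpleGraph V) : Prop :=
  ∀ a b c d e, F.Adj a b → F.Adj b c → F.Adj c d → F.Adj d e →
    ¬ F.Adj a c → ¬ F.Adj a d → ¬ F.Adj a e → ¬ F.Adj b d → ¬ F.Adj b e → ¬ F.Adj c e → False

/-- No induced banner (the complement of the hammer): a four-cycle `a b c d` with a pendant `e`
at `a`. The vertices `b` and `d` are twins, so their distinctness has to be assumed. -/
def NoBanner {V : Type*} (F : SimpleGraph V) : Prop :=
  ∀ a b c d e, b ≠ d → F.Adj a b → F.Adj b c → F.Adj c d → F.Adj a d → F.Adj a e →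
    ¬ F.Adj a c → ¬ F.Adj b d → ¬ F.Adj b e → ¬ F.Adj c e → ¬ F.Adj d e → False

/-- `K` is a component of the non-neighbourhood of `q`, and `K` is not a clique. -/
structure NonCliqueComp {V : Type*} (F : SimpleGraph V) (q : V) (K : Set V) : Prop where
  ne : q ∉ K
  nadj : ∀ k ∈ K, ¬ F.Adj q k
  conn : Conn F.Adj K
  closed : ∀ k ∈ K, ∀ u, F.Adj k u → u ∈ K ∨ F.Adj q u
  nonclique : ∃ s ∈ K, ∃ t ∈ K, s ≠ t ∧ ¬ F.Adj s t

/-- Neighbours of `q` that are mixed on `K`. -/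
def Mixed {V : Type*} (F : SimpleGraph V) (q : V) (K : Set V) (z : V) : Prop :=
  F.Adj q z ∧ (∃ a ∈ K, F.Adj z a) ∧ ∃ b ∈ K, ¬ F.Adj z b

namespace NonCliqueComp

variable {V : Type*} {F : SimpleGraph V} {q : V} {K : Set V}

/-- A subset of `K` on which `K` itself is not mixed is mixed on by a neighbour of `q`. -/
lemma exists_mixed_on (h : NonCliqueComp F q K) (hp : PrimeGraph F) (X : Set V)
    (hX : X.Nontrivial) (hXK : X ⊆ K)
    (hom : ∀ u ∈ K, u ∉ X → ∀ a ∈ X, ∀ b ∈ X, F.Adj u a → F.Adj u b) :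
    ∃ z, F.Adj q z ∧ (∃ a ∈ X, F.Adj z a) ∧ ∃ b ∈ X, ¬ F.Adj z b := by
  obtain ⟨u, huX, ⟨a, ha, hua⟩, b, hb, hub⟩ := hp X hX (by
    rintro rfl
    exact h.ne (hXK (Set.mem_univ q)))
  refine ⟨u, ?_, ⟨a, ha, hua⟩, b, hb, hub⟩
  rcases h.closed a (hXK ha) u hua.symm with huK | hqu
  · exact absurd (hom u huK huX a ha b hb hua) hub
  · exact hqu

lemma nontrivial (h : NonCliqueComp F q K) : K.Nontrivial := by
  obtain ⟨s, hs, t, ht, hst, -⟩ := h.nonclique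
  exact ⟨s, hs, t, ht, hst⟩

/-- A neighbour of `q` splits a non-adjacent pair of `K`: otherwise a non-trivial component of the
complement of `K` would be homogeneous. -/
lemma exists_mixed_nonedge (h : NonCliqueComp F q K) (hp : PrimeGraph F) :
    ∃ z x y, Mixed F q K z ∧ x ∈ K ∧ y ∈ K ∧ x ≠ y ∧ ¬ F.Adj x y ∧ F.Adj z x ∧ ¬ F.Adj z y := by
  obtain ⟨s, hs, t, ht, hst, hnst⟩ := h.nonclique
  obtain ⟨Q, hsQ, hQK, hQc, hQcl⟩ := exists_component (fun a b => a ≠ b ∧ ¬ F.Adj a b)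
    (fun a b hab => ⟨hab.1.symm, fun h' => hab.2 h'.symm⟩) K s hs
  have htQ : t ∈ Q := hQcl s hsQ t ht ⟨hst, hnst⟩
  obtain ⟨z, hqz, hza, hzb⟩ := h.exists_mixed_on hp Q ⟨s, hsQ, t, htQ, hst⟩ hQK (by
    intro u huK huQ a ha b hb _
    by_contra hub
    exact huQ (hQcl b hb u huK ⟨fun e => huQ (e ▸ hb), fun h' => hub h'.symm⟩))
  obtain ⟨x, hx, y, hy, ⟨hxy, hnxy⟩, hzx, hzy⟩ := hQc (F.Adj z) hza hzb
  exact ⟨z, x, y, ⟨hqz, ⟨x, hQK hx, hzx⟩, y, hQK hy, hzy⟩, hQK hx, hQK hy, hxy, hnxy, hzx, hzy⟩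

/-- Every vertex of `K` has a neighbour in `K`. -/
lemma exists_nbr (h : NonCliqueComp F q K) {x : V} (hx : x ∈ K) : ∃ y ∈ K, F.Adj x y := by
  obtain ⟨y, hy, hyx⟩ := h.nontrivial.exists_ne x
  obtain ⟨s, hs, t, ht, hst, rfl, -⟩ := h.conn (fun v => v = x) ⟨x, hx, rfl⟩ ⟨y, hy, hyx⟩
  exact ⟨t, ht, hst⟩

/-- If the vertices complete to `K` are adjacent to all mixed vertices, they do not exist: they
would be complete to the component of `q` in the graph without them, which is then homogeneous. -/
lemma no_complete (h : NonCliqueComp F q K) (hp : PrimeGraph F) (hb : NoBull F)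
    (H1 : ∀ w z, F.Adj q w → (∀ k ∈ K, F.Adj w k) → Mixed F q K z → F.Adj w z) :
    ∀ w, F.Adj q w → ¬ ∀ k ∈ K, F.Adj w k := by
  obtain ⟨z, x, y, hz, hx, hy, hxy, hnxy, hzx, hzy⟩ := h.exists_mixed_nonedge hp
  have hqz := hz.1
  have hqx := h.nadj x hx
  have hqy := h.nadj y hy
  have H2 : ∀ w r, F.Adj q w → (∀ k ∈ K, F.Adj w k) → F.Adj q r → (∀ k ∈ K, ¬ F.Adj r k) →
      F.Adj w r := by
    intro w r hqw hw hqr hr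
    by_contra hwr
    have hwz := H1 w z hqw hw hz
    have hwx := hw x hx
    have hwy := hw y hy
    have hrx := hr x hx
    have hry := hr y hy
    by_cases hrz : F.Adj r z
    · refine hb w z x y r ?_ ?_ ?_ ?_ ?_ ?_ ?_ ?_ ?_ ?_ <;>
        first | assumption | (rw [F.adj_comm]; assumption)
    · refine hb w q z y r ?_ ?_ ?_ ?_ ?_ ?_ ?_ ?_ ?_ ?_ <;>
        first | assumption | (rw [F.adj_comm]; assumption)
  -- a vertex complete to `K` sees all neighbours of `q`, except possibly those complete to `K`
  have H3 : ∀ w u, F.Adj q w → (∀ k ∈ K, F.Adj w k) → F.Adj q u → (¬ ∀ k ∈ K, F.Adj u k) →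
      F.Adj w u := by
    intro w u hqw hw hqu hu
    by_cases hur : ∀ k ∈ K, ¬ F.Adj u k
    · exact H2 w u hqw hw hqu hur
    · push Not at hu hur
      exact H1 w u hqw hw ⟨hqu, hur, hu⟩
  let W : Set V := {w | F.Adj q w ∧ ∀ k ∈ K, F.Adj w k}
  intro w0 hqw0 hw0
  have hqW : q ∈ Wᶜ := fun hq => F.irrefl hq.1
  obtain ⟨C, hqC, hCW, hCc, hCcl⟩ := exists_component F.Adj (fun _ _ e => e.symm) Wᶜ q hqW
  have hzW : z ∈ Wᶜ := fun hw => hzy (hw.2 y hy)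
  have hzC : z ∈ C := hCcl q hqC z hzW hqz
  -- `W` is complete to `C`
  have key : ∀ w ∈ W, ∀ u ∈ C, F.Adj w u := by
    rintro w ⟨hqw, hw⟩
    obtain ⟨A, hqA, hAN, hAc, hAcl⟩ := exists_component F.Adj (fun _ _ e => e.symm)
      {v | v ∈ C ∧ F.Adj w v} q ⟨hqC, hqw.symm⟩
    by_contra hcon
    push Not at hcon
    obtain ⟨u0, hu0C, hu0⟩ := hcon
    obtain ⟨u1, hu1C, u, huC, hu1u, hu1A, huA⟩ :=
      hCc (fun v => v ∈ A) ⟨q, hqC, hqA⟩ ⟨u0, hu0C, fun h' => hu0 (hAN h').2⟩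
    have hwu : ¬ F.Adj w u := fun h' => huA (hAcl u1 hu1A u ⟨huC, h'⟩ hu1u)
    have huW : u ∉ W := hCW huC
    have huK : u ∉ K := fun h' => hwu (hw u h')
    have hqu : ¬ F.Adj q u := fun h' =>
      hwu (H3 w u hqw hw h' (fun h'' => huW ⟨h', h''⟩))
    have huk : ∀ k ∈ K, ¬ F.Adj u k := fun k hk h' => by
      rcases h.closed k hk u h'.symm with h1 | h1
      · exact huK h1
      · exact hqu h1
    obtain ⟨a, haA, b, hbA, hab, hua, hub⟩ :=
      hAc (F.Adj u) ⟨u1, hu1A, hu1u.symm⟩ ⟨q, hqA, fun h' => hqu h'.symm⟩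
    have hwa := (hAN haA).2
    have hwb := (hAN hbA).2
    by_cases haz : F.Adj q a
    · -- the triangle `w a q`
      have haW : ¬ ∀ k ∈ K, F.Adj a k := fun h' => hCW (hAN haA).1 ⟨haz, h'⟩
      push Not at haW
      obtain ⟨k, hk, hak⟩ := haW
      have hwk := hw k hk
      have hqk := h.nadj k hk
      have huk' := huk k hk
      refine hb w a q k u ?_ ?_ ?_ ?_ ?_ ?_ ?_ ?_ ?_ ?_ <;>
        first | assumption | (rw [F.adj_comm]; assumption)
    · have haK : ∀ k ∈ K, ¬ F.Adj a k := fun k hk h' => by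
        rcases h.closed k hk a h'.symm with h1 | h1
        · exact huk a h1 hua
        · exact haz h1
      have hbK : ∃ k ∈ K, ¬ F.Adj b k := by
        by_contra hcon
        push Not at hcon
        rcases h.closed x hx b (hcon x hx).symm with h1 | h1
        · exact haK b h1 hab
        · exact hCW (hAN hbA).1 ⟨h1, hcon⟩
      obtain ⟨k, hk, hbk⟩ := hbK
      have hwk := hw k hk
      have huk' := huk k hk
      have hak := haK k hk
      refine hb w a b k u ?_ ?_ ?_ ?_ ?_ ?_ ?_ ?_ ?_ ?_ <;>
        first | assumption | (rw [F.adj_comm]; assumption)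
  obtain ⟨u, huC, ⟨a, ha, hua⟩, b, hbC, hub⟩ := hp C ⟨q, hqC, z, hzC, hqz.ne⟩ (by
    intro hC
    exact hCW (hC ▸ Set.mem_univ w0 : w0 ∈ C) ⟨hqw0, hw0⟩)
  by_cases huW : u ∈ W
  · exact hub (key u huW b hbC)
  · exact huC (hCcl a ha u huW hua.symm)

/-- The part of the argument common to paths and banners: the neighbourhood of `q` is stable. The
four hypotheses are what has to be extracted from the excluded graph. -/
lemma nbhd_stable (h : NonCliqueComp F q K) (hp : PrimeGraph F) (hb : NoBull F)
    (H1 : ∀ w z, F.Adj q w → (∀ k ∈ K, F.Adj w k) → Mixed F q K z → F.Adj w z)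
    (H3 : ∀ z z', Mixed F q K z → Mixed F q K z' → F.Adj z z' → ∀ k ∈ K, F.Adj z k → F.Adj z' k)
    (H4 : (∀ z z', Mixed F q K z → Mixed F q K z' → ¬ F.Adj z z') →
      ∀ n z z', F.Adj q n → (∀ k ∈ K, ¬ F.Adj n k) → Mixed F q K z → Mixed F q K z' →
        F.Adj n z → F.Adj n z')
    (H5 : ∀ r z u, F.Adj q r → (∀ k ∈ K, ¬ F.Adj r k) → Mixed F q K z → u ≠ q → ¬ F.Adj q u →
      (∀ k ∈ K, ¬ F.Adj u k) → F.Adj r u → F.Adj u z → ¬ F.Adj r z → False) :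
    ∀ a b, F.Adj q a → F.Adj q b → ¬ F.Adj a b := by
  have hW := h.no_complete hp hb H1
  -- neighbours of `q` are mixed on `K` or anticomplete to it
  have dich : ∀ u, F.Adj q u → Mixed F q K u ∨ ∀ k ∈ K, ¬ F.Adj u k := by
    intro u hqu
    by_cases hu : ∀ k ∈ K, ¬ F.Adj u k
    · exact Or.inr hu
    · have := hW u hqu
      push Not at this hu
      exact Or.inl ⟨hqu, hu, this⟩
  -- mixed vertices are pairwise non-adjacent
  have hZ : ∀ z z', Mixed F q K z → Mixed F q K z' → ¬ F.Adj z z' := by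
    intro z1 z2 hz1 hz2 h12
    obtain ⟨D, h1D, hDZ, hDc, hDcl⟩ := exists_component F.Adj (fun _ _ e => e.symm)
      {z | Mixed F q K z} z1 hz1
    have h2D : z2 ∈ D := hDcl z1 h1D z2 hz2 h12
    obtain ⟨u, huD, hua, hub⟩ := hp D ⟨z1, h1D, z2, h2D, h12.ne⟩ (by
      rintro rfl
      exact F.irrefl (hDZ (Set.mem_univ q)).1)
    obtain ⟨z, hzD, z', hz'D, hzz', huz, huz'⟩ := hDc (F.Adj u) hua hub
    have hz := hDZ hzD
    have hz' := hDZ hz'D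
    have huM : ¬ Mixed F q K u := fun h' => huD (hDcl z hzD u h' huz.symm)
    have huK : u ∉ K := fun h' => huz' (H3 z z' hz hz' hzz' u h' huz.symm).symm
    have huq : u ≠ q := by
      rintro rfl
      exact huz' hz'.1
    have huk : ∀ k ∈ K, ¬ F.Adj u k := by
      by_cases hqu : F.Adj q u
      · exact (dich u hqu).resolve_left huM
      · intro k hk h'
        exact (h.closed k hk u h'.symm).elim huK hqu
    obtain ⟨x, hx, y, hy, hxy, hzx, hzy⟩ := h.conn (F.Adj z) hz.2.1 hz.2.2
    have hz'x := H3 z z' hz hz' hzz' x hx hzx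
    have hz'y : ¬ F.Adj z' y := fun h' => hzy (H3 z' z hz' hz hzz'.symm y hy h')
    have hux := huk x hx
    have huy := huk y hy
    refine hb z x z' u y ?_ ?_ ?_ ?_ ?_ ?_ ?_ ?_ ?_ ?_ <;>
      first | assumption | (rw [F.adj_comm]; assumption)
  -- mixed and anticomplete vertices are not adjacent
  have hRZ : ∀ n z, F.Adj q n → (∀ k ∈ K, ¬ F.Adj n k) → Mixed F q K z → ¬ F.Adj n z := by
    intro n z0 hqn hn hz0 hnz0
    have hnZ : ∀ z, Mixed F q K z → F.Adj n z := fun z hz => H4 hZ n z0 z hqn hn hz0 hz hnz0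
    obtain ⟨Q, hqQ, hQA, hQc, hQcl⟩ := exists_component F.Adj (fun _ _ e => e.symm)
      {v | ∀ z, Mixed F q K z → F.Adj v z} q (fun z hz => hz.1)
    have hnQ : n ∈ Q := hQcl q hqQ n hnZ hqn
    have hQZ : ∀ b ∈ Q, ¬ Mixed F q K b := fun b hbQ h' => F.irrefl (hQA hbQ b h')
    -- `Q` avoids `K` and its neighbours
    have hNK : ∀ k ∈ K, ∀ u, F.Adj k u → u ∈ K ∨ Mixed F q K u := by
      intro k hk u hku
      rcases h.closed k hk u hku with h1 | h1
      · exact Or.inl h1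
      · exact Or.inr ((dich u h1).resolve_right fun h2 => h2 k hk hku.symm)
    have hQK : ∀ b ∈ Q, b ∉ K := by
      intro b hbQ hbK
      obtain ⟨s, hs, t, ht, hst, hsK, htK⟩ := hQc (· ∈ K) ⟨b, hbQ, hbK⟩ ⟨q, hqQ, h.ne⟩
      exact (hNK s hsK t hst).elim htK (hQZ t ht)
    obtain ⟨u, huQ, hua, hub⟩ := hp Q ⟨q, hqQ, n, hnQ, hqn.ne⟩ (by
      rintro rfl
      exact hQZ z0 (Set.mem_univ _) hz0)
    obtain ⟨b, hbQ, b', hb'Q, hbb', hub1, hub2⟩ := hQc (F.Adj u) hua hub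
    have huA : ¬ ∀ z, Mixed F q K z → F.Adj u z := fun h' => huQ (hQcl b hbQ u h' hub1.symm)
    push Not at huA
    obtain ⟨z, hz, huz⟩ := huA
    have huZ : ¬ Mixed F q K u := fun h' => hub2 (hQA hb'Q u h').symm
    obtain ⟨x, hx, hzx⟩ := hz.2.1
    have hout : ∀ v, v ∉ K → ¬ Mixed F q K v → ¬ F.Adj v x := fun v h1 h2 h3 =>
      (hNK x hx v h3.symm).elim h1 h2
    have huK : u ∉ K := fun h' => (hNK u h' b hub1).elim (hQK b hbQ) (hQZ b hbQ)
    have hux := hout u huK huZ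
    have hbx := hout b (hQK b hbQ) (hQZ b hbQ)
    have hbx' := hout b' (hQK b' hb'Q) (hQZ b' hb'Q)
    have hbz := hQA hbQ z hz
    have hbz' := hQA hb'Q z hz
    refine hb z b b' x u ?_ ?_ ?_ ?_ ?_ ?_ ?_ ?_ ?_ ?_ <;>
      first | assumption | (rw [F.adj_comm]; assumption)
  -- anticomplete vertices are pairwise non-adjacent
  have hR : ∀ r r', F.Adj q r → F.Adj q r' → (∀ k ∈ K, ¬ F.Adj r k) → (∀ k ∈ K, ¬ F.Adj r' k) →
      ¬ F.Adj r r' := by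
    intro r1 r2 hq1 hq2 h1 h2 h12
    obtain ⟨E, h1E, hER, hEc, hEcl⟩ := exists_component F.Adj (fun _ _ e => e.symm)
      {r | F.Adj q r ∧ ∀ k ∈ K, ¬ F.Adj r k} r1 ⟨hq1, h1⟩
    have h2E : r2 ∈ E := hEcl r1 h1E r2 ⟨hq2, h2⟩ h12
    obtain ⟨u, huE, hua, hub⟩ := hp E ⟨r1, h1E, r2, h2E, h12.ne⟩ (by
      rintro rfl
      exact F.irrefl (hER (Set.mem_univ q)).1)
    obtain ⟨r, hrE, r', hr'E, hrr', hur, hur'⟩ := hEc (F.Adj u) hua hub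
    obtain ⟨hqr, hr⟩ := hER hrE
    obtain ⟨hqr', hr'⟩ := hER hr'E
    obtain ⟨z, -, -, hz, -⟩ := h.exists_mixed_nonedge hp
    have huq : u ≠ q := by
      rintro rfl
      exact hur' hqr'
    have hqu : ¬ F.Adj q u := by
      intro h'
      rcases dich u h' with h3 | h3
      · exact hRZ r u hqr hr h3 hur.symm
      · exact huE (hEcl r hrE u ⟨h', h3⟩ hur.symm)
    have huK : u ∉ K := fun h' => hr u h' hur.symm
    have huk : ∀ k ∈ K, ¬ F.Adj u k := fun k hk h' =>
      (h.closed k hk u h'.symm).elim huK hqu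
    have hrz := hRZ r z hqr hr hz
    have hrz' := hRZ r' z hqr' hr' hz
    have hqz := hz.1
    by_cases huz : F.Adj u z
    · exact H5 r z u hqr hr hz huq hqu huk hur.symm huz hrz
    · refine hb q r r' z u ?_ ?_ ?_ ?_ ?_ ?_ ?_ ?_ ?_ ?_ <;>
        first | assumption | (rw [F.adj_comm]; assumption)
  intro a b hqa hqb
  rcases dich a hqa with ha | ha <;> rcases dich b hqb with hb' | hb'
  · exact hZ a b ha hb'
  · exact fun e => hRZ b a hqb hb' ha e.symm
  · exact hRZ a b hqa ha hb'
  · exact hR a b hqa hqb ha hb'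

end NonCliqueComp

/-! ### Excluding the path on five vertices -/

/-- With neither bull nor `P5`, a neighbour `z` of `v` cannot distinguish two non-adjacent vertices
`s`, `t` with a common neighbour `y`, all three non-adjacent to `v`. -/
lemma adj_of_common_nbr {V : Type*} {F : SimpleGraph V} (hb : NoBull F) (hP : NoP5 F)
    {v s t y z : V} (hvz : F.Adj v z) (hvs : ¬ F.Adj v s) (hvt : ¬ F.Adj v t)
    (hvy : ¬ F.Adj v y) (hst : ¬ F.Adj s t) (hys : F.Adj y s) (hyt : F.Adj y t)
    (hzs : F.Adj z s) : F.Adj z t := by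
  by_contra hzt
  by_cases hzy : F.Adj z y
  · refine hb z y s v t ?_ ?_ ?_ ?_ ?_ ?_ ?_ ?_ ?_ ?_ <;>
      first | assumption | (rw [F.adj_comm]; assumption)
  · refine hP v z s y t ?_ ?_ ?_ ?_ ?_ ?_ ?_ ?_ ?_ ?_ <;>
      first | assumption | (rw [F.adj_comm]; assumption)

namespace NonCliqueComp

variable {V : Type*} {F : SimpleGraph V} {q : V} {K : Set V}

/-- Two adjacent vertices of `K` with the same neighbours in `K` are split by a neighbour of `q`;
the one it sees, `x`, is either universal in `K` or starts an induced path `x t u` in `K`. -/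
lemma twins_cases (h : NonCliqueComp F q K) (hp : PrimeGraph F) {x y : V} (hx : x ∈ K)
    (hy : y ∈ K) (hxy : F.Adj x y)
    (tw : ∀ k ∈ K, k ≠ x → k ≠ y → (F.Adj k x ↔ F.Adj k y)) :
    ∃ a b z, a ∈ K ∧ b ∈ K ∧ F.Adj a b ∧ F.Adj q z ∧ F.Adj z a ∧ ¬ F.Adj z b ∧
      ((∃ t ∈ K, ∃ u ∈ K, F.Adj a t ∧ F.Adj t u ∧ ¬ F.Adj a u ∧ F.Adj b t ∧ ¬ F.Adj b u) ∨
        (∀ k ∈ K, k ≠ a → F.Adj a k) ∧ ∀ k ∈ K, k ≠ b → F.Adj b k) := by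
  have aux : ∀ a b z, a ∈ K → b ∈ K → F.Adj a b → F.Adj q z → F.Adj z a → ¬ F.Adj z b →
      (∀ k ∈ K, k ≠ a → k ≠ b → (F.Adj k a ↔ F.Adj k b)) →
      ((∃ t ∈ K, ∃ u ∈ K, F.Adj a t ∧ F.Adj t u ∧ ¬ F.Adj a u ∧ F.Adj b t ∧ ¬ F.Adj b u) ∨
        (∀ k ∈ K, k ≠ a → F.Adj a k) ∧ ∀ k ∈ K, k ≠ b → F.Adj b k) := by
    intro a b z ha hb hab hqz hza hzb tw
    by_cases hun : ∀ k ∈ K, k ≠ a → F.Adj a k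
    · refine Or.inr ⟨hun, fun k hk hkb => ?_⟩
      by_cases hka : k = a
      · exact hka ▸ hab.symm
      · exact ((tw k hk hka hkb).1 (hun k hk hka).symm).symm
    · left
      push Not at hun
      obtain ⟨k, hk, hka, hak⟩ := hun
      obtain ⟨t, ht, u, hu, htu, hpt, hpu⟩ := h.conn (fun v => v = a ∨ F.Adj a v)
        ⟨a, ha, Or.inl rfl⟩ ⟨k, hk, fun h' => h'.elim hka hak⟩
      push Not at hpu
      have hat : F.Adj a t := hpt.resolve_left (fun e => hpu.2 (e ▸ htu))
      have hub : u ≠ b := fun e => hpu.2 (e ▸ hab)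
      have hbu : ¬ F.Adj b u := fun e => hpu.2 ((tw u hu hpu.1 hub).2 e.symm).symm
      have htb : t ≠ b := fun e => hbu (e ▸ htu)
      exact ⟨t, ht, u, hu, hat, htu, hpu.2, ((tw t ht hat.ne' htb).1 hat.symm).symm, hbu⟩
  obtain ⟨z, hqz, ⟨a, ha, hza⟩, b, hb, hzb⟩ := h.exists_mixed_on hp {x, y}
    ⟨x, by simp, y, by simp, hxy.ne⟩ (by rintro k (rfl | rfl) <;> assumption) (by
      intro u hu hune a ha b hb hua
      simp only [Set.mem_insert_iff, Set.mem_singleton_iff, not_or] at hune ha hb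
      have := tw u hu hune.1 hune.2
      rcases ha with rfl | rfl <;> rcases hb with rfl | rfl <;> tauto)
  rcases ha with rfl | rfl <;> rcases hb with rfl | rfl
  · exact absurd hza hzb
  · exact ⟨a, b, z, hx, hy, hxy, hqz, hza, hzb, aux a b z hx hy hxy hqz hza hzb tw⟩
  · exact ⟨a, b, z, hy, hx, hxy.symm, hqz, hza, hzb, aux a b z hy hx hxy.symm hqz hza hzb
      fun k hk h1 h2 => (tw k hk h2 h1).symm⟩
  · exact absurd hza hzb

/-- No two adjacent vertices of `K` have the same neighbours in the rest of `K`. -/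
lemma no_twins_P5 (h : NonCliqueComp F q K) (hp : PrimeGraph F) (hb : NoBull F) (hP : NoP5 F)
    {x y : V} (hx : x ∈ K) (hy : y ∈ K) (hxy : F.Adj x y)
    (tw : ∀ k ∈ K, k ≠ x → k ≠ y → (F.Adj k x ↔ F.Adj k y)) : False := by
  obtain ⟨a, b, z, ha, hbK, hab, hqz, hza, hzb, hc⟩ := h.twins_cases hp hx hy hxy tw
  rcases hc with ⟨t, ht, u, hu, hat, htu, hau, hbt, hbu⟩ | ⟨hun, -⟩
  · have hzu := adj_of_common_nbr hb hP hqz (h.nadj a ha) (h.nadj u hu) (h.nadj t ht) hau hat.symm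
      htu hza
    exact hzb (adj_of_common_nbr hb hP hqz (h.nadj u hu) (h.nadj b hbK) (h.nadj t ht)
      (fun e => hbu e.symm) htu hbt.symm hzu)
  · obtain ⟨z, s, t, hz, hs, ht, hst, hnst, hzs, hzt⟩ := h.exists_mixed_nonedge hp
    have hsa : s ≠ a := by
      rintro rfl
      exact hnst (hun t ht hst.symm)
    have hta : t ≠ a := by
      rintro rfl
      exact hnst (hun s hs hst).symm
    exact hzt (adj_of_common_nbr hb hP hz.1 (h.nadj s hs) (h.nadj t ht) (h.nadj a ha) hnst
      (hun s hs hsa) (hun t ht hta) hzs)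

/-- A mixed vertex `z` sees exactly one end of every edge of `K`. Otherwise let `D` be a component
of the neighbours, or of the non-neighbours, of `z` in `K` that contains an edge; no vertex of
`K` is mixed on `D`, and either an anticomponent of `D` or a pair of twins of `K` results. -/
lemma cross_P5 (h : NonCliqueComp F q K) (hp : PrimeGraph F) (hb : NoBull F) (hP : NoP5 F)
    {x y z : V} (hz : Mixed F q K z) (hx : x ∈ K) (hy : y ∈ K) (hxy : F.Adj x y) :
    F.Adj z x ↔ ¬ F.Adj z y := by
  by_contra hcon
  have hyx : F.Adj z y ↔ F.Adj z x := by tauto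
  have rule : ∀ s y t, s ∈ K → y ∈ K → t ∈ K → F.Adj y s → F.Adj y t → ¬ F.Adj s t →
      F.Adj z s → F.Adj z t := fun s y t hs hy ht hys hyt hst =>
    adj_of_common_nbr hb hP hz.1 (h.nadj s hs) (h.nadj t ht) (h.nadj y hy) hst hys hyt
  obtain ⟨D, hxD, hDA, hDc, hDcl⟩ := exists_component F.Adj (fun _ _ e => e.symm)
    {k | k ∈ K ∧ (F.Adj z k ↔ F.Adj z x)} x ⟨hx, Iff.rfl⟩
  have hyD : y ∈ D := hDcl x hxD y ⟨hy, hyx⟩ hxy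
  have hDK : ∀ d ∈ D, d ∈ K := fun d hd => (hDA hd).1
  have unif : ∀ k ∈ K, k ∉ D → ∀ a ∈ D, ∀ b ∈ D, F.Adj k a → F.Adj k b := by
    intro k hk hkD a ha b hb' hka
    by_contra hkb
    obtain ⟨s, hs, t, ht, hst, hks, hkt⟩ := hDc (F.Adj k) ⟨a, ha, hka⟩ ⟨b, hb', hkb⟩
    have hkst : ¬ (F.Adj z k ↔ F.Adj z x) := fun e => hkD (hDcl s hs k ⟨hk, e⟩ hks.symm)
    have h1 := rule k s t hk (hDK s hs) (hDK t ht) hks.symm hst hkt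
    have h2 := rule t s k (hDK t ht) (hDK s hs) hk hst hks.symm (fun e => hkt e.symm)
    have h3 := (hDA ht).2
    tauto
  have hout : ∃ k ∈ K, k ∉ D := by
    obtain ⟨-, ⟨a, ha, hza⟩, b, hb', hzb⟩ := hz
    by_cases hzx : F.Adj z x
    · exact ⟨b, hb', fun e => hzb ((hDA e).2.2 hzx)⟩
    · exact ⟨a, ha, fun e => hzx ((hDA e).2.1 hza)⟩
  obtain ⟨s, hs, e, he, hse, hsD, heD⟩ := h.conn (· ∈ D) ⟨x, hx, hxD⟩ hout
  have heD' : ∀ d ∈ D, F.Adj e d := fun d hd => unif e he heD s hsD d hd hse.symm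
  by_cases hcl : ∃ a ∈ D, ∃ b ∈ D, a ≠ b ∧ ¬ F.Adj a b
  · obtain ⟨a, ha, b, hb', hab, hnab⟩ := hcl
    obtain ⟨Q, haQ, hQD, hQc, hQcl⟩ := exists_component (fun a b => a ≠ b ∧ ¬ F.Adj a b)
      (fun a b hab => ⟨hab.1.symm, fun h' => hab.2 h'.symm⟩) D a ha
    have hbQ : b ∈ Q := hQcl a haQ b hb' ⟨hab, hnab⟩
    obtain ⟨z1, hqz1, hz1a, hz1b⟩ := h.exists_mixed_on hp Q ⟨a, haQ, b, hbQ, hab⟩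
      (fun k hk => hDK k (hQD hk)) (by
        intro u hu huQ a ha b hb' hua
        by_cases huD : u ∈ D
        · by_contra hub
          exact huQ (hQcl b hb' u huD ⟨fun e => huQ (e ▸ hb'), fun h' => hub h'.symm⟩)
        · exact unif u hu huD a (hQD ha) b (hQD hb') hua)
    obtain ⟨s, hs, t, ht, ⟨-, hst⟩, hz1s, hz1t⟩ := hQc (F.Adj z1) hz1a hz1b
    exact hz1t (adj_of_common_nbr hb hP hqz1 (h.nadj s (hDK s (hQD hs)))
      (h.nadj t (hDK t (hQD ht))) (h.nadj e he) hst (heD' s (hQD hs)) (heD' t (hQD ht)) hz1s)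
  · push Not at hcl
    refine h.no_twins_P5 hp hb hP hx hy hxy fun k hk hkx hky => ?_
    by_cases hkD : k ∈ D
    · exact iff_of_true (hcl k hkD x hxD hkx) (hcl k hkD y hyD hky)
    · exact ⟨unif k hk hkD x hxD y hyD, unif k hk hkD y hyD x hxD⟩

/-- All mixed vertices have the same neighbours in `K`: by `cross_P5` the neighbourhoods of two of
them are equal or complementary in `K`. -/
lemma same_nbrs_P5 (h : NonCliqueComp F q K) (hp : PrimeGraph F) (hb : NoBull F) (hP : NoP5 F)
    {z z' : V} (hz : Mixed F q K z) (hz' : Mixed F q K z') :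
    ∀ k ∈ K, F.Adj z k ↔ F.Adj z' k := by
  obtain ⟨z0, x0, y0, hz0, hx0, hy0, hne, hnxy, hzx, hzy⟩ := h.exists_mixed_nonedge hp
  have key : ∀ z', Mixed F q K z' → ∀ k ∈ K, F.Adj z0 k ↔ F.Adj z' k := by
    intro z' hz'
    by_contra hcon
    have hopp : ∀ k ∈ K, ¬ (F.Adj z0 k ↔ F.Adj z' k) := by
      by_contra hcon2
      push Not at hcon
      push Not at hcon2
      obtain ⟨a, ha, hza⟩ := hcon
      obtain ⟨b, hb', hzb⟩ := hcon2
      obtain ⟨s, hs, t, ht, hst, h1, h2⟩ := h.conn (fun k => F.Adj z0 k ↔ F.Adj z' k)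
        ⟨b, hb', by tauto⟩ ⟨a, ha, by tauto⟩
      have h3 := h.cross_P5 hp hb hP hz0 hs ht hst
      have h4 := h.cross_P5 hp hb hP hz' hs ht hst
      tauto
    have hz'x : ¬ F.Adj z' x0 := fun e => hopp x0 hx0 (iff_of_true hzx e)
    have hz'y : F.Adj z' y0 := by
      by_contra e
      exact hopp y0 hy0 (iff_of_false hzy e)
    have hqz0 := hz0.1
    have hqz' := hz'.1
    have hqx := h.nadj x0 hx0
    have hqy := h.nadj y0 hy0
    by_cases hzz : F.Adj z0 z'
    · refine hb z0 z' q x0 y0 ?_ ?_ ?_ ?_ ?_ ?_ ?_ ?_ ?_ ?_ <;>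
        first | assumption | (rw [F.adj_comm]; assumption)
    · refine hP x0 z0 q z' y0 ?_ ?_ ?_ ?_ ?_ ?_ ?_ ?_ ?_ ?_ <;>
        first | assumption | (rw [F.adj_comm]; assumption)
  exact fun k hk => (key z hz k hk).symm.trans (key z' hz' k hk)

/-- The neighbourhood of `q` is stable when bull and `P5` are excluded. -/
lemma nbhd_stable_P5 (h : NonCliqueComp F q K) (hp : PrimeGraph F) (hb : NoBull F) (hP : NoP5 F) :
    ∀ a b, F.Adj q a → F.Adj q b → ¬ F.Adj a b := by
  have H : ∀ r z, F.Adj q r → (∀ k ∈ K, ¬ F.Adj r k) → Mixed F q K z → F.Adj r z := by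
    intro r z hqr hr hz
    by_contra hrz
    obtain ⟨x, hx, y, hy, hxy, hzx, hzy⟩ := h.conn (F.Adj z) hz.2.1 hz.2.2
    have hqz := hz.1
    have hqx := h.nadj x hx
    have hqy := h.nadj y hy
    have hrx := hr x hx
    have hry := hr y hy
    refine hP r q z x y ?_ ?_ ?_ ?_ ?_ ?_ ?_ ?_ ?_ ?_ <;>
      first | assumption | (rw [F.adj_comm]; assumption)
  refine h.nbhd_stable hp hb ?_ ?_ ?_ ?_
  · intro w z hqw hw hz
    by_contra hwz
    obtain ⟨z0, x0, y0, hz0, hx0, hy0, hne, hnxy, hzx0, hzy0⟩ := h.exists_mixed_nonedge hp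
    have hzx : F.Adj z x0 := (h.same_nbrs_P5 hp hb hP hz0 hz x0 hx0).1 hzx0
    have hzy : ¬ F.Adj z y0 := fun e => hzy0 ((h.same_nbrs_P5 hp hb hP hz0 hz y0 hy0).2 e)
    obtain ⟨y, hy, hxy⟩ := h.exists_nbr hx0
    have hzy' : ¬ F.Adj z y := (h.cross_P5 hp hb hP hz hx0 hy hxy).1 hzx
    have hyy : ¬ F.Adj y y0 := fun e => by
      have := h.cross_P5 hp hb hP hz hy hy0 e
      tauto
    exact hnxy (adj_of_common_nbr hb hP hzx hzy' hzy (fun e => hwz e.symm) hyy (hw y hy)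
      (hw y0 hy0) hxy)
  · exact fun z z' hz hz' _ k hk => (h.same_nbrs_P5 hp hb hP hz hz' k hk).1
  · exact fun _ n z z' hqn hn _ hz' _ => H n z' hqn hn hz'
  · exact fun r z u hqr hr hz _ _ _ _ _ hrz => hrz (H r z hqr hr hz)

end NonCliqueComp

/-! ### Excluding the banner -/

namespace NonCliqueComp

variable {V : Type*} {F : SimpleGraph V} {q : V} {K : Set V}

/-- A neighbour of `q` that sees the middle and one end of an induced path `s y t` of `K` sees the
other end. -/
lemma path_mid (h : NonCliqueComp F q K) (hb : NoBull F) {z s y t : V} (hqz : F.Adj q z)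
    (hs : s ∈ K) (hy : y ∈ K) (ht : t ∈ K) (hys : F.Adj y s) (hyt : F.Adj y t)
    (hst : ¬ F.Adj s t) (hzs : F.Adj z s) (hzy : F.Adj z y) : F.Adj z t := by
  by_contra hzt
  have hqs := h.nadj s hs
  have hqy := h.nadj y hy
  have hqt := h.nadj t ht
  refine hb z y s q t ?_ ?_ ?_ ?_ ?_ ?_ ?_ ?_ ?_ ?_ <;>
    first | assumption | (rw [F.adj_comm]; assumption)

/-- A neighbour of `q` that sees both ends of an induced path `s y t` of `K` sees the middle. -/
lemma path_ends (h : NonCliqueComp F q K) (hB : NoBanner F) {z s y t : V} (hqz : F.Adj q z)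
    (hs : s ∈ K) (hy : y ∈ K) (ht : t ∈ K) (hne : s ≠ t) (hys : F.Adj y s) (hyt : F.Adj y t)
    (hst : ¬ F.Adj s t) (hzs : F.Adj z s) (hzt : F.Adj z t) : F.Adj z y := by
  by_contra hzy
  have hqs := h.nadj s hs
  have hqy := h.nadj y hy
  have hqt := h.nadj t ht
  refine hB z s y t q hne ?_ ?_ ?_ ?_ ?_ ?_ ?_ ?_ ?_ ?_ <;>
    first | assumption | (rw [F.adj_comm]; assumption)

/-- A neighbour of `q` differs from every vertex of `K`. -/
lemma ne_of_adj (h : NonCliqueComp F q K) {z k : V} (hqz : F.Adj q z) (hk : k ∈ K) : z ≠ k :=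
  fun e => h.nadj k hk (e ▸ hqz)

/-- No two adjacent vertices of `K` have the same neighbours in the rest of `K`. -/
lemma no_twins_banner (h : NonCliqueComp F q K) (hp : PrimeGraph F) (hb : NoBull F)
    (hB : NoBanner F) {x y : V} (hx : x ∈ K) (hy : y ∈ K) (hxy : F.Adj x y)
    (tw : ∀ k ∈ K, k ≠ x → k ≠ y → (F.Adj k x ↔ F.Adj k y)) : False := by
  obtain ⟨a, b, z, ha, hbK, hab, hqz, hza, hzb, hc⟩ := h.twins_cases hp hx hy hxy tw
  rcases hc with ⟨t, ht, u, hu, hat, htu, hau, hbt, hbu⟩ | ⟨huna, hunb⟩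
  · have hne : a ≠ u := fun e => hbu (e ▸ hab.symm)
    have hzt : ¬ F.Adj z t := fun e => hzb (h.path_mid hb hqz hu ht hbK htu hbt.symm
      (fun e => hbu e.symm) (h.path_mid hb hqz ha ht hu hat.symm htu hau hza e) e)
    have hzu : ¬ F.Adj z u := fun e =>
      hzt (h.path_ends hB hqz ha ht hu hne hat.symm htu hau hza e)
    refine hb a t b z u ?_ ?_ ?_ ?_ ?_ ?_ ?_ ?_ ?_ ?_ <;>
      first | assumption | (rw [F.adj_comm]; assumption)
  · obtain ⟨z2, s, t, hz2, hs, ht, hst, hnst, hzs, hzt⟩ := h.exists_mixed_nonedge hp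
    have hqz2 := hz2.1
    have hnts : ¬ F.Adj t s := fun e => hnst e.symm
    have hsu : ∀ d, (∀ k ∈ K, k ≠ d → F.Adj d k) → F.Adj d s ∧ F.Adj d t := by
      intro d hd
      have hsd : s ≠ d := by
        rintro rfl
        exact hnst (hd t ht hst.symm)
      have htd : t ≠ d := by
        rintro rfl
        exact hnts (hd s hs hst)
      exact ⟨hd s hs hsd, hd t ht htd⟩
    obtain ⟨has, hat⟩ := hsu a huna
    obtain ⟨hbs, hbt⟩ := hsu b hunb
    have h2a : ¬ F.Adj z2 a := fun e => hzt (h.path_mid hb hqz2 hs ha ht has hat hnst hzs e)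
    have h2b : ¬ F.Adj z2 b := fun e => hzt (h.path_mid hb hqz2 hs hbK ht hbs hbt hnst hzs e)
    have h1s : ¬ F.Adj z s := fun e => hzb (h.path_ends hB hqz hs hbK ht hst hbs hbt hnst e
      (h.path_mid hb hqz hs ha ht has hat hnst e hza))
    have h1t : ¬ F.Adj z t := fun e => h1s (h.path_mid hb hqz ht ha hs hat has hnts e hza)
    have hzz : F.Adj z z2 := by
      by_contra hzz
      refine hb a s b z z2 ?_ ?_ ?_ ?_ ?_ ?_ ?_ ?_ ?_ ?_ <;>
        first | assumption | (rw [F.adj_comm]; assumption)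
    refine hB a s z2 z t (h.ne_of_adj hqz hs).symm ?_ ?_ ?_ ?_ ?_ ?_ ?_ ?_ ?_ ?_ <;>
      first | assumption | (rw [F.adj_comm]; assumption)

/-- The neighbours of a mixed vertex in `K` form a stable set: a component with an edge would be a
clique, and no other vertex of `K` would be mixed on it. -/
lemma stable_banner (h : NonCliqueComp F q K) (hp : PrimeGraph F) (hb : NoBull F)
    (hB : NoBanner F) {x y z : V} (hz : Mixed F q K z) (hx : x ∈ K) (hy : y ∈ K)
    (hzx : F.Adj z x) (hzy : F.Adj z y) : ¬ F.Adj x y := by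
  intro hxy
  obtain ⟨D, hxD, hDA, hDc, hDcl⟩ := exists_component F.Adj (fun _ _ e => e.symm)
    {k | k ∈ K ∧ F.Adj z k} x ⟨hx, hzx⟩
  have hyD : y ∈ D := hDcl x hxD y ⟨hy, hzy⟩ hxy
  have unif : ∀ k ∈ K, k ∉ D → ∀ a ∈ D, ∀ b ∈ D, F.Adj k a → F.Adj k b := by
    intro k hk hkD a ha b hb' hka
    by_contra hkb
    obtain ⟨s, hs, t, ht, hst, hks, hkt⟩ := hDc (F.Adj k) ⟨a, ha, hka⟩ ⟨b, hb', hkb⟩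
    exact hkD (hDcl s hs k ⟨hk, h.path_mid hb hz.1 (hDA ht).1 (hDA hs).1 hk hst hks.symm
      (fun e => hkt e.symm) (hDA ht).2 (hDA hs).2⟩ hks.symm)
  obtain ⟨v, hv, hzv⟩ := hz.2.2
  obtain ⟨s, hs, e, he, hse, hsD, heD⟩ := h.conn (· ∈ D) ⟨x, hx, hxD⟩
    ⟨v, hv, fun e => hzv (hDA e).2⟩
  have hcl : ∀ a ∈ D, ∀ b ∈ D, a ≠ b → F.Adj a b := by
    intro a ha b hb' hab
    by_contra hnab
    exact heD (hDcl s hsD e ⟨he, h.path_ends hB hz.1 (hDA ha).1 he (hDA hb').1 hab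
      (unif e he heD s hsD a ha hse.symm) (unif e he heD s hsD b hb' hse.symm) hnab
      (hDA ha).2 (hDA hb').2⟩ hse)
  refine h.no_twins_banner hp hb hB hx hy hxy fun k hk hkx hky => ?_
  by_cases hkD : k ∈ D
  · exact iff_of_true (hcl k hkD x hxD hkx) (hcl k hkD y hyD hky)
  · exact ⟨unif k hk hkD x hxD y hyD, unif k hk hkD y hyD x hxD⟩

/-- Two neighbours of a mixed vertex in `K` have no common neighbour in `K`. -/
lemma no_common_nbr_banner (h : NonCliqueComp F q K) (hp : PrimeGraph F) (hb : NoBull F)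
    (hB : NoBanner F) {x y z k : V} (hz : Mixed F q K z) (hx : x ∈ K) (hy : y ∈ K) (hne : x ≠ y)
    (hzx : F.Adj z x) (hzy : F.Adj z y) (hk : k ∈ K) (hkx : F.Adj k x) : ¬ F.Adj k y := by
  intro hky
  have hxy := h.stable_banner hp hb hB hz hx hy hzx hzy
  exact h.stable_banner hp hb hB hz hk hx
    (h.path_ends hB hz.1 hx hk hy hne hkx hky hxy hzx hzy) hzx hkx

/-- A vertex complete to `K` sees all mixed vertices. -/
lemma complete_adj_banner (h : NonCliqueComp F q K) (hp : PrimeGraph F) (hb : NoBull F)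
    (hB : NoBanner F) {w z : V} (hqw : F.Adj q w) (hw : ∀ k ∈ K, F.Adj w k)
    (hz : Mixed F q K z) : F.Adj w z := by
  by_contra hwz
  have compl : ∀ z, Mixed F q K z → ¬ F.Adj w z → ∀ x ∈ K, ∀ y ∈ K, F.Adj z x → ¬ F.Adj z y →
      F.Adj x y := by
    intro z hz hwz x hx y hy hzx hzy
    by_contra hxy
    have hqz := hz.1
    have hqx := h.nadj x hx
    have hqy := h.nadj y hy
    have hwx := hw x hx
    have hwy := hw y hy
    refine hB w q z x y (fun e => h.ne (e ▸ hx)) ?_ ?_ ?_ ?_ ?_ ?_ ?_ ?_ ?_ ?_ <;>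
      first | assumption | (rw [F.adj_comm]; assumption)
  obtain ⟨hqz, ⟨x, hx, hzx⟩, v, hv, hzv⟩ := id hz
  have uniq : ∀ k ∈ K, F.Adj z k → k = x := by
    intro k hk hzk
    by_contra hkx
    exact h.no_common_nbr_banner hp hb hB hz hk hx hkx hzk hzx hv
      (compl z hz hwz k hk v hv hzk hzv).symm (compl z hz hwz x hx v hv hzx hzv).symm
  have hxu : ∀ k ∈ K, k ≠ x → F.Adj x k := fun k hk hkx =>
    compl z hz hwz x hx k hk hzx fun e => hkx (uniq k hk e)
  obtain ⟨z2, y, y2, hz2, hy, hy2, hyy, hnyy, h2y, h2y2⟩ := h.exists_mixed_nonedge hp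
  have hyx : y ≠ x := by
    rintro rfl
    exact hnyy (hxu y2 hy2 hyy.symm)
  have hy2x : y2 ≠ x := by
    rintro rfl
    exact hnyy (hxu y hy hyy).symm
  have hxy := hxu y hy hyx
  have hxy2 := hxu y2 hy2 hy2x
  have h2x : ¬ F.Adj z2 x := fun e => h.stable_banner hp hb hB hz2 hx hy e h2y hxy
  have hzy : ¬ F.Adj z y := fun e => hyx (uniq y hy e)
  have hzy2 : ¬ F.Adj z y2 := fun e => hy2x (uniq y2 hy2 e)
  by_cases hzz : F.Adj z z2
  · refine hB x z z2 y y2 (h.ne_of_adj hqz hy) ?_ ?_ ?_ ?_ ?_ ?_ ?_ ?_ ?_ ?_ <;>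
      first | assumption | (rw [F.adj_comm]; assumption)
  · by_cases hw2 : F.Adj w z2
    · have hq2 := hz2.1
      have hqy2 := h.nadj y2 hy2
      have hwy2 := hw y2 hy2
      refine hb q w z2 z y2 ?_ ?_ ?_ ?_ ?_ ?_ ?_ ?_ ?_ ?_ <;>
        first | assumption | (rw [F.adj_comm]; assumption)
    · exact hnyy (compl z2 hz2 hw2 y hy y2 hy2 h2y h2y2)

/-- Adjacent mixed vertices have the same neighbours in `K`. -/
lemma mono_banner (h : NonCliqueComp F q K) (hp : PrimeGraph F) (hb : NoBull F)
    (hB : NoBanner F) {z z' : V} (hz : Mixed F q K z) (hz' : Mixed F q K z')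
    (hzz : F.Adj z z') : ∀ k ∈ K, F.Adj z k → F.Adj z' k := by
  intro p hp' hzp
  by_contra hz'p
  have hqz := hz.1
  have hqz' := hz'.1
  have st := fun {x y} => h.stable_banner (x := x) (y := y) hp hb hB hz
  have st' := fun {x y} => h.stable_banner (x := x) (y := y) hp hb hB hz'
  by_cases hinc : ∃ p' ∈ K, F.Adj z' p' ∧ ¬ F.Adj z p'
  · obtain ⟨p', hpK', hz'p', hzp'⟩ := hinc
    have hqp := h.nadj p hp'
    have hqp' := h.nadj p' hpK'
    have hpp : F.Adj p p' := by
      by_contra hpp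
      refine hb z z' q p p' ?_ ?_ ?_ ?_ ?_ ?_ ?_ ?_ ?_ ?_ <;>
        first | assumption | (rw [F.adj_comm]; assumption)
    refine h.no_twins_banner hp hb hB hp' hpK' hpp fun k hk hkp hkp' => ?_
    by_cases hzk : F.Adj z k
    · refine iff_of_false (st hk hp' hzk hzp) fun e => ?_
      exact h.no_common_nbr_banner hp hb hB hz hk hp' hkp hzk hzp hpK' e.symm hpp.symm
    by_cases hz'k : F.Adj z' k
    · refine iff_of_false (fun e => ?_) (st' hk hpK' hz'k hz'p')
      exact h.no_common_nbr_banner hp hb hB hz' hk hpK' hkp' hz'k hz'p' hp' e.symm hpp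
    constructor
    · intro hkp
      by_contra hkp'
      refine hB p z z' p' k (h.ne_of_adj hqz hpK') ?_ ?_ ?_ ?_ ?_ ?_ ?_ ?_ ?_ ?_ <;>
        first | assumption | (rw [F.adj_comm]; assumption)
    · intro hkp'
      by_contra hkp
      refine hB p' z' z p k (h.ne_of_adj hqz' hp') ?_ ?_ ?_ ?_ ?_ ?_ ?_ ?_ ?_ ?_ <;>
        first | assumption | (rw [F.adj_comm]; assumption)
  · push Not at hinc
    obtain ⟨x, hx, hz'x⟩ := hz'.2.1
    have hzx := hinc x hx hz'x
    obtain ⟨y, hy, hxy⟩ := h.exists_nbr hx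
    have hzy : ¬ F.Adj z y := fun e => st hx hy hzx e hxy
    have hz'y : ¬ F.Adj z' y := fun e => hzy (hinc y hy e)
    have hxp := st hx hp' hzx hzp
    have hyp := h.no_common_nbr_banner hp hb hB hz hx hp' (fun e => hz'p (e ▸ hz'x)) hzx hzp hy
      hxy.symm
    refine hb z x z' p y ?_ ?_ ?_ ?_ ?_ ?_ ?_ ?_ ?_ ?_ <;>
      first | assumption | (rw [F.adj_comm]; assumption)

/-- The neighbourhood of `q` is stable when bull and banner are excluded. -/
lemma nbhd_stable_banner (h : NonCliqueComp F q K) (hp : PrimeGraph F) (hb : NoBull F)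
    (hB : NoBanner F) : ∀ a b, F.Adj q a → F.Adj q b → ¬ F.Adj a b := by
  refine h.nbhd_stable hp hb (fun w z hqw hw hz => h.complete_adj_banner hp hb hB hqw hw hz)
    (fun z z' hz hz' hzz => h.mono_banner hp hb hB hz hz' hzz) ?_ ?_
  · intro hZ n z z' hqn hn hz hz' hnz
    by_contra hnz'
    obtain ⟨x, hx, y, hy, hxy, hzx, hzy⟩ := h.conn (F.Adj z) hz.2.1 hz.2.2
    have hqz := hz.1
    have hqz' := hz'.1
    have hqx := h.nadj x hx
    have hqy := h.nadj y hy
    have hnx := hn x hx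
    have hzz := hZ z z' hz hz'
    have hz'x : F.Adj z' x := by
      by_contra hz'x
      refine hb q z n z' x ?_ ?_ ?_ ?_ ?_ ?_ ?_ ?_ ?_ ?_ <;>
        first | assumption | (rw [F.adj_comm]; assumption)
    have hz'y : ¬ F.Adj z' y := fun e => h.stable_banner hp hb hB hz' hx hy hz'x e hxy
    refine hB x z q z' y (fun e => hnz' (e ▸ hnz)) ?_ ?_ ?_ ?_ ?_ ?_ ?_ ?_ ?_ ?_ <;>
      first | assumption | (rw [F.adj_comm]; assumption)
  · intro r z u hqr hr hz huq hqu huk hru huz hrz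
    obtain ⟨x, hx, hzx⟩ := hz.2.1
    have hqz := hz.1
    have hqx := h.nadj x hx
    have hrx := hr x hx
    have hux := huk x hx
    refine hB z q r u x huq.symm ?_ ?_ ?_ ?_ ?_ ?_ ?_ ?_ ?_ ?_ <;>
      first | assumption | (rw [F.adj_comm]; assumption)

end NonCliqueComp

/-! ### A vertex whose non-neighbours form a clique -/

/-- A prime graph `F` with a stable set of three vertices has an induced path on three vertices
together with a vertex seeing none of it. Otherwise each vertex would see at most one vertex of
every stable triple, and `F` would be a disjoint union of cliques,
which is not prime. -/
lemma exists_copaw {V : Type*} {F : SimpleGraph V} (hp : PrimeGraph F)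
    (hT : ∃ a b c, a ≠ b ∧ a ≠ c ∧ b ≠ c ∧ ¬ F.Adj a b ∧ ¬ F.Adj a c ∧ ¬ F.Adj b c) :
    ∃ q s y t, F.Adj y s ∧ F.Adj y t ∧ s ≠ t ∧ ¬ F.Adj s t ∧
      ¬ F.Adj q s ∧ ¬ F.Adj q y ∧ ¬ F.Adj q t := by
  by_contra hcon
  have cop : ∀ q s y t, F.Adj y s → F.Adj y t → s ≠ t → ¬ F.Adj s t →
      ¬ F.Adj q s → ¬ F.Adj q y → ¬ F.Adj q t → False :=
    fun q s y t h1 h2 h3 h4 h5 h6 h7 => hcon ⟨q, s, y, t, h1, h2, h3, h4, h5, h6, h7⟩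
  have two : ∀ a b c v, a ≠ b → a ≠ c → b ≠ c → ¬ F.Adj a b → ¬ F.Adj a c → ¬ F.Adj b c →
      F.Adj v a → F.Adj v b → False := by
    intro a b c v hab hac hbc nab nac nbc hva hvb
    by_cases hvc : F.Adj v c
    · obtain ⟨u, hu, -, x, hx, hux⟩ := hp {x | ¬ (F.Adj x a ∧ F.Adj x b ∧ F.Adj x c)}
        ⟨a, fun h => F.irrefl h.1, b, fun h => F.irrefl h.2.1, hab⟩ (by
          intro h
          exact (h ▸ Set.mem_univ v : v ∈ {x | ¬ (F.Adj x a ∧ F.Adj x b ∧ F.Adj x c)})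
            ⟨hva, hvb, hvc⟩)
      simp only [Set.mem_ofPred_eq, not_not] at hu hx
      obtain ⟨hua, hub, huc⟩ := hu
      have hxu : ¬ F.Adj x u := fun e => hux e.symm
      by_cases xa : F.Adj x a <;> by_cases xb : F.Adj x b <;> by_cases xc : F.Adj x c
      · exact hx ⟨xa, xb, xc⟩
      · exact cop c a x b xa xb hab nab (fun e => nac e.symm) (fun e => xc e.symm)
          (fun e => nbc e.symm)
      · exact cop b a x c xa xc hac nac (fun e => nab e.symm) (fun e => xb e.symm) nbc
      · exact cop x b u c hub huc hbc nbc xb hxu xc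
      · exact cop a b x c xb xc hbc nbc nab (fun e => xa e.symm) nac
      · exact cop x a u c hua huc hac nac xa hxu xc
      · exact cop x a u b hua hub hab nab xa hxu xb
      · exact cop x a u b hua hub hab nab xa hxu xb
    · exact cop c a v b hva hvb hab nab (fun e => nac e.symm) (fun e => hvc e.symm)
        (fun e => nbc e.symm)
  obtain ⟨a, b, c, hab, hac, hbc, nab, nac, nbc⟩ := hT
  have ext : ∀ v, ∃ p r, v ≠ p ∧ v ≠ r ∧ p ≠ r ∧ ¬ F.Adj v p ∧ ¬ F.Adj v r ∧ ¬ F.Adj p r := by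
    intro v
    have nba : ¬ F.Adj b a := fun e => nab e.symm
    have nca : ¬ F.Adj c a := fun e => nac e.symm
    have ncb : ¬ F.Adj c b := fun e => nbc e.symm
    by_cases e1 : v = a
    · subst e1; exact ⟨b, c, hab, hac, hbc, nab, nac, nbc⟩
    by_cases e2 : v = b
    · subst e2; exact ⟨a, c, hab.symm, hbc, hac, nba, nbc, nac⟩
    by_cases e3 : v = c
    · subst e3; exact ⟨a, b, hac.symm, hbc.symm, hab, nca, ncb, nab⟩
    by_cases va : F.Adj v a
    · exact ⟨b, c, e2, e3, hbc, fun e => two a b c v hab hac hbc nab nac nbc va e,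
        fun e => two a c b v hac hab hbc.symm nac nab ncb va e, nbc⟩
    by_cases vb : F.Adj v b
    · exact ⟨a, c, e1, e3, hac, va, fun e => two b c a v hbc hab.symm hac.symm nbc nba nca vb e,
        nac⟩
    · exact ⟨a, b, e1, e2, hab, va, vb, nab⟩
  have noP3 : ∀ s y t, F.Adj y s → F.Adj y t → s ≠ t → F.Adj s t := by
    intro s y t hys hyt hst
    by_contra nst
    obtain ⟨p, r, hsp, hsr, hpr, nsp, nsr, npr⟩ := ext s
    have nyp : ¬ F.Adj y p := fun e =>
      two s p r y hsp hsr hpr nsp nsr npr hys e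
    have nyr : ¬ F.Adj y r := fun e =>
      two s r p y hsr hsp hpr.symm nsr nsp (fun e => npr e.symm) hys e
    have htp : t ≠ p := fun e => nyp (e ▸ hyt)
    have hyp : y ≠ p := fun e => nsp (e ▸ hys.symm)
    have hyr : y ≠ r := fun e => nsr (e ▸ hys.symm)
    have ntp : ¬ F.Adj t p := fun e => two y p r t hyp hyr hpr nyp nyr npr hyt.symm e
    exact two s t p y hst hsp htp nst nsp ntp hys hyt
  obtain ⟨u, hu, ⟨x, hx, hux⟩, -⟩ := hp {a, b} ⟨a, by simp, b, by simp, hab⟩ (by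
    intro h
    have : c ∈ ({a, b} : Set V) := h ▸ Set.mem_univ c
    simp [hac.symm, hbc.symm] at this)
  obtain ⟨p, r, hup, hur, hpr, nup, nur, npr⟩ := ext u
  obtain ⟨v, hv, ⟨y, hy, hvy⟩, z, hz, hvz⟩ := hp {u, x} ⟨u, by simp, x, by simp, hux.ne⟩ (by
    intro h
    have : p ∈ ({u, x} : Set V) := h ▸ Set.mem_univ p
    simp only [Set.mem_insert_iff, Set.mem_singleton_iff] at this
    exact this.elim (fun e => hup e.symm) fun e => nup (e ▸ hux))
  simp only [Set.mem_insert_iff, Set.mem_singleton_iff, not_or] at hv hy hz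
  rcases hy with rfl | rfl <;> rcases hz with rfl | rfl
  · exact hvz hvy
  · exact hvz (noP3 v y z hvy.symm hux hv.2)
  · exact hvz (noP3 v y z hvy.symm hux.symm hv.1)
  · exact hvz hvy

/-- In the complement `F` of a prime graph with a triangle that excludes the bull and one of house
and hammer, the neighbourhood of some vertex is stable. -/
lemma exists_stable_nbhd {V : Type*} {F : SimpleGraph V} (hp : PrimeGraph F) (hb : NoBull F)
    (hX : NoP5 F ∨ NoBanner F)
    (hT : ∃ a b c, a ≠ b ∧ a ≠ c ∧ b ≠ c ∧ ¬ F.Adj a b ∧ ¬ F.Adj a c ∧ ¬ F.Adj b c) :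
    ∃ q, ∀ a b, F.Adj q a → F.Adj q b → ¬ F.Adj a b := by
  obtain ⟨q, s, y, t, hys, hyt, hst, nst, nqs, nqy, nqt⟩ := exists_copaw hp hT
  have hqy : y ≠ q := by
    rintro rfl
    exact nqs hys
  have hqs : s ≠ q := by
    rintro rfl
    exact nqy hys.symm
  have hqt : t ≠ q := by
    rintro rfl
    exact nqy hyt.symm
  obtain ⟨K, hyK, hKA, hKc, hKcl⟩ := exists_component F.Adj (fun _ _ e => e.symm)
    {k | k ≠ q ∧ ¬ F.Adj q k} y ⟨hqy, nqy⟩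
  have h : NonCliqueComp F q K :=
    { ne := fun h => (hKA h).1 rfl
      nadj := fun k hk => (hKA hk).2
      conn := hKc
      closed := by
        intro k hk u hku
        by_cases hqu : F.Adj q u
        · exact Or.inr hqu
        · refine Or.inl (hKcl k hk u ⟨?_, hqu⟩ hku)
          rintro rfl
          exact (hKA hk).2 hku.symm
      nonclique := ⟨s, hKcl y hyK s ⟨hqs, nqs⟩ hys, t, hKcl y hyK t ⟨hqt, nqt⟩ hyt, hst, nst⟩ }
  exact ⟨q, hX.elim (h.nbhd_stable_P5 hp hb) (h.nbhd_stable_banner hp hb)⟩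

/-! ### Induced subgraphs -/

lemma ContainsInduced.trans {α β γ : Type*} {G : SimpleGraph α} {H : SimpleGraph β}
    {L : SimpleGraph γ} (h : ContainsInduced G H) (h' : ContainsInduced H L) :
    ContainsInduced G L := by
  obtain ⟨f, hf⟩ := h
  obtain ⟨g, hg⟩ := h'
  exact ⟨g.trans f, fun a b => (hf _ _).trans (hg a b)⟩

lemma ContainsInduced.induce {α : Type*} (G : SimpleGraph α) (s : Set α) :
    ContainsInduced G (G.induce s) :=
  ⟨Function.Embedding.subtype _, fun _ _ => Iff.rfl⟩

lemma ContainsInduced.of_iso {α β : Type*} {G : SimpleGraph α} {H : SimpleGraph β}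
    (e : G ≃g H) : ContainsInduced G H :=
  ⟨e.symm.toEquiv.toEmbedding, fun _ _ => e.symm.map_rel_iff⟩

/-- Five distinct vertices whose adjacencies are prescribed by `H`. -/
lemma ContainsInduced.of_fin_five {V : Type*} (G : SimpleGraph V) (H : SimpleGraph (Fin 5))
    (f : Fin 5 → V) (hne : ∀ i j, i < j → f i ≠ f j)
    (hadj : ∀ i j, i < j → (G.Adj (f i) (f j) ↔ H.Adj i j)) : ContainsInduced G H := by
  refine ⟨⟨f, fun i j hij => ?_⟩, fun i j => ?_⟩
  · by_contra h
    rcases lt_or_gt_of_ne h with h | h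
    · exact hne i j h hij
    · exact hne j i h hij.symm
  · rcases lt_trichotomy i j with h | rfl | h
    · exact hadj i j h
    · simp
    · rw [G.adj_comm, H.adj_comm]
      exact hadj j i h

lemma noBull_compl {V : Type*} {G : SimpleGraph V} (h : IsFree G bull) : NoBull Gᶜ := by
  intro a b c d e hab hbc hac had hbe nae nbd ncd nce nde
  have hae : a ≠ e := fun x => nde (x ▸ had.symm)
  have hbd : b ≠ d := fun x => nde (x ▸ hbe)
  have hcd : c ≠ d := fun x => nbd (x ▸ hbc)
  have hce : c ≠ e := fun x => nae (x ▸ hac)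
  have hde : d ≠ e := fun x => nbd (x ▸ hbe)
  simp only [compl_adj, not_and, not_not] at *
  apply h
  apply ContainsInduced.of_fin_five G bull ![d, e, c, b, a]
  · intro i j hij
    fin_cases i <;> fin_cases j <;> simp at hij <;>
      simp [*, Ne.symm, eq_comm]
  · intro i j hij
    fin_cases i <;> fin_cases j <;> simp at hij <;> simp [bull, *, G.adj_comm]

lemma noP5_compl {V : Type*} {G : SimpleGraph V} (h : IsFree G house) : NoP5 Gᶜ := by
  intro a b c d e hab hbc hcd hde nac nad nae nbd nbe nce
  have hac : a ≠ c := fun x => nad (x ▸ hcd)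
  have had : a ≠ d := fun x => nae (x ▸ hde)
  have hae : a ≠ e := fun x => nad (x ▸ hde.symm)
  have hbd : b ≠ d := fun x => nbe (x ▸ hde)
  have hbe : b ≠ e := fun x => nae (x ▸ hab)
  have hce : c ≠ e := fun x => nbe (x ▸ hbc)
  simp only [compl_adj, not_and, not_not] at *
  apply h
  apply ContainsInduced.of_fin_five G house ![a, b, c, d, e]
  · intro i j hij
    fin_cases i <;> fin_cases j <;> simp at hij <;> simp [*]
  · intro i j hij
    fin_cases i <;> fin_cases j <;> simp at hij <;>
      simp [house, pathGraph_adj, *]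

lemma noBanner_compl {V : Type*} {G : SimpleGraph V} (h : IsFree G hammer) : NoBanner Gᶜ := by
  intro a b c d e hbd hab hbc hcd had hae nac nbd nbe nce nde
  have hac : a ≠ c := fun x => nce (x ▸ hae)
  have hbe : b ≠ e := fun x => nce (x ▸ hbc.symm)
  have hce : c ≠ e := fun x => nac (x ▸ hae)
  have hde : d ≠ e := fun x => nce (x ▸ hcd)
  simp only [compl_adj, not_and, not_not] at *
  apply h
  apply ContainsInduced.of_fin_five G hammer ![b, d, e, c, a]
  · intro i j hij
    fin_cases i <;> fin_cases j <;> simp at hij <;> simp [*] <;> grind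
  · intro i j hij
    fin_cases i <;> fin_cases j <;> simp at hij <;> simp [hammer, *] <;>
      grind [SimpleGraph.adj_comm]

lemma containsInduced_triangle {V : Type*} {G : SimpleGraph V} {a b c : V} (hab : G.Adj a b)
    (hbc : G.Adj b c) (hac : G.Adj a c) : ContainsInduced G (cycleGraph 3) := by
  have hab' := hab.symm
  have hbc' := hbc.symm
  have hac' := hac.symm
  rw [cycleGraph_three_eq_top]
  refine ⟨⟨![a, b, c], ?_⟩, ?_⟩
  · intro i j hij
    have := hab.ne
    have := hbc.ne
    have := hac.ne
    fin_cases i <;> fin_cases j <;> simp at hij <;> grind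
  · intro i j
    change G.Adj (![a, b, c] i) (![a, b, c] j) ↔ _
    fin_cases i <;> fin_cases j <;> simp [*]

lemma triangle_of_bull : ContainsInduced bull (cycleGraph 3) :=
  containsInduced_triangle (a := 0) (b := 1) (c := 2) (by simp [bull]) (by simp [bull])
    (by simp [bull])

lemma triangle_of_house : ContainsInduced house (cycleGraph 3) :=
  containsInduced_triangle (a := 0) (b := 2) (c := 4) (by simp [house, pathGraph_adj])
    (by simp [house, pathGraph_adj]) (by simp [house, pathGraph_adj])

lemma triangle_of_hammer : ContainsInduced hammer (cycleGraph 3) :=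
  containsInduced_triangle (a := 0) (b := 1) (c := 2) (by simp [hammer]) (by simp [hammer])
    (by simp [hammer])

/-! ### Weighted cliques and colourings of vertex sets -/

section Weights

variable {V : Type*} [Fintype V] (G : SimpleGraph V)

lemma bddAbove_wClique (w : V → ℕ) (s : Set V) :
    BddAbove {n | ∃ t : Finset V, ↑t ⊆ s ∧ G.IsClique (↑t : Set V) ∧ ∑ v ∈ t, w v = n} := by
  refine ⟨∑ v, w v, ?_⟩
  rintro n ⟨t, -, -, rfl⟩
  exact Finset.sum_le_sum_of_subset (Finset.subset_univ t)

lemma exists_wClique (w : V → ℕ) (s : Set V) :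
    ∃ t : Finset V, ↑t ⊆ s ∧ G.IsClique (↑t : Set V) ∧ ∑ v ∈ t, w v = wCliqueNumOn G w s := by
  exact Nat.sSup_mem (by exact ⟨0, ∅, by simp⟩) (bddAbove_wClique G w s)

variable {G}

lemma le_wClique (w : V → ℕ) {s : Set V} {t : Finset V} (hts : ↑t ⊆ s)
    (ht : G.IsClique (↑t : Set V)) : ∑ v ∈ t, w v ≤ wCliqueNumOn G w s :=
  le_csSup (bddAbove_wClique G w s) ⟨t, hts, ht, rfl⟩

lemma wClique_lt (w : V → ℕ) {s : Set V} {m : ℕ}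
    (h : ∀ t : Finset V, ↑t ⊆ s → G.IsClique (↑t : Set V) → ∑ v ∈ t, w v < m) :
    wCliqueNumOn G w s < m := by
  obtain ⟨t, hts, ht, e⟩ := exists_wClique G w s
  exact e ▸ h t hts ht

lemma cliqueNumOn_eq {V : Type*} (G : SimpleGraph V) (s : Set V) :
    cliqueNumOn G s = wCliqueNumOn G (fun _ => 1) s := by
  simp [cliqueNumOn, wCliqueNumOn, isNClique_iff]

/-- The vertices of `s` have a proper colouring with the colours `0, …, k - 1`. -/
def ColOn {V : Type*} (G : SimpleGraph V) (s : Set V) (k : ℕ) : Prop :=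
  ∃ f : V → ℕ, (∀ v ∈ s, f v < k) ∧ ∀ u ∈ s, ∀ v ∈ s, G.Adj u v → f u ≠ f v

/-- `G` induces a perfect graph on `A`, phrased without subtypes: each `s ⊆ A` can be coloured
with any number `k` of colours that bounds the cliques of `s`. -/
def PerfOn {V : Type*} (G : SimpleGraph V) (A : Set V) : Prop :=
  ∀ s ⊆ A, ∀ k, (∀ t : Finset V, ↑t ⊆ s → G.IsClique (↑t : Set V) → t.card ≤ k) → ColOn G s k

lemma PerfOn.mono {V : Type*} {G : SimpleGraph V} {A B : Set V} (h : PerfOn G A) (hBA : B ⊆ A) :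
    PerfOn G B :=
  fun s hs => h s (hs.trans hBA)

lemma colOn_iff {V : Type*} (G : SimpleGraph V) (s : Set V) (k : ℕ) :
    ColOn G s k ↔ (G.induce s).Colorable k := by
  classical
  constructor
  · rintro ⟨f, h1, h2⟩
    exact ⟨Coloring.mk (fun v => (⟨f v, h1 v v.2⟩ : Fin k)) fun {u v} huv e =>
      h2 u u.2 v v.2 huv (Fin.mk.inj_iff.1 e)⟩
  · rintro ⟨c⟩
    refine ⟨fun v => if h : v ∈ s then (c ⟨v, h⟩ : ℕ) else 0, fun v hv => ?_, fun u hu v hv huv => ?_⟩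
    · simp [hv]
    · simp only [hu, hv, dif_pos]
      exact fun e => c.valid (v := ⟨u, hu⟩) (w := ⟨v, hv⟩) huv (Fin.ext e)

lemma isPerfect_iff : IsPerfect G ↔ PerfOn G Set.univ := by
  constructor
  · intro h s _ k hk
    rw [colOn_iff]
    obtain ⟨t, hts, ht, e⟩ := exists_wClique G (fun _ => 1) s
    rw [← chromaticNumber_le_iff_colorable, h s, cliqueNumOn_eq, ← e]
    simpa using hk t hts ht
  · intro h s
    obtain ⟨t, hts, ht, e⟩ := exists_wClique G (fun _ => 1) s
    rw [cliqueNumOn_eq]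
    apply le_antisymm
    · rw [chromaticNumber_le_iff_colorable, ← colOn_iff]
      exact h s (Set.subset_univ s) _ fun t hts ht => by
        simpa using le_wClique (fun _ => 1) hts ht
    · classical
      have hc : (G.induce s).IsClique (↑(t.subtype (· ∈ s)) : Set s) := by
        intro a ha b hb hab
        exact ht (by simpa using ha) (by simpa using hb) fun e => hab (Subtype.ext e)
      have := hc.card_le_chromaticNumber
      rw [Finset.card_subtype, Finset.filter_true_of_mem fun x hx => hts hx] at this
      rw [← e]
      simpa using this

/-- Cliques of a set correspond to cliques of its image under an embedding. -/
lemma wClique_image {W : Type*} [Fintype W] {H : SimpleGraph W} (f : H ↪g G) (w : V → ℕ)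
    (s : Set W) : wCliqueNumOn G w (f '' s) = wCliqueNumOn H (w ∘ f) s := by
  classical
  apply le_antisymm
  · obtain ⟨t, hts, ht, e⟩ := exists_wClique G w (f '' s)
    obtain ⟨t', ht's, rfl⟩ := Finset.subset_set_image_iff.1 hts
    rw [Finset.sum_image f.injective.injOn] at e
    rw [← e]
    refine le_wClique (w ∘ f) ht's fun a ha b hb hab => f.map_rel_iff.1 (ht ?_ ?_ ?_)
    · exact Finset.mem_coe.2 (Finset.mem_image_of_mem f ha)
    · exact Finset.mem_coe.2 (Finset.mem_image_of_mem f hb)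
    · exact f.injective.ne hab
  · obtain ⟨t, hts, ht, e⟩ := exists_wClique H (w ∘ f) s
    have := le_wClique (G := G) w (s := f '' s) (t := t.image f)
      (by rw [Finset.coe_image]; exact Set.image_mono hts) (by
        rw [Finset.coe_image]
        rintro _ ⟨a, ha, rfl⟩ _ ⟨b, hb, rfl⟩ hab
        exact f.map_rel_iff.2 (ht ha hb fun e => hab (e ▸ rfl)))
    rw [Finset.sum_image f.injective.injOn] at this
    exact e ▸ this

lemma card_le_iff (s : Set V) (k : ℕ) :
    (∀ t : Finset V, ↑t ⊆ s → G.IsClique (↑t : Set V) → t.card ≤ k) ↔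
      wCliqueNumOn G (fun _ => 1) s ≤ k := by
  constructor
  · intro h
    obtain ⟨t, hts, ht, e⟩ := exists_wClique G (fun _ => 1) s
    rw [← e]
    simpa using h t hts ht
  · intro h t hts ht
    refine le_trans ?_ h
    simpa using le_wClique (fun _ => 1) hts ht

lemma perfOn_image {W : Type*} [Fintype W] {H : SimpleGraph W} (f : H ↪g G) (A : Set W) :
    PerfOn G (f '' A) ↔ PerfOn H A := by
  classical
  have hcl : ∀ (s : Set W) (k : ℕ),
      (∀ t : Finset V, ↑t ⊆ f '' s → G.IsClique (↑t : Set V) → t.card ≤ k) ↔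
        ∀ t : Finset W, ↑t ⊆ s → H.IsClique (↑t : Set W) → t.card ≤ k := by
    intro s k
    rw [card_le_iff, card_le_iff, wClique_image]
    rfl
  have hcol : ∀ (s : Set W) (k : ℕ), ColOn G (f '' s) k ↔ ColOn H s k := by
    intro s k
    constructor
    · rintro ⟨c, h1, h2⟩
      exact ⟨c ∘ f, fun v hv => h1 _ ⟨v, hv, rfl⟩,
        fun u hu v hv huv => h2 _ ⟨u, hu, rfl⟩ _ ⟨v, hv, rfl⟩ (f.map_rel_iff.2 huv)⟩
    · rintro ⟨c, h1, h2⟩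
      refine ⟨Function.extend f c 0, ?_, ?_⟩
      · rintro _ ⟨v, hv, rfl⟩
        rw [f.injective.extend_apply]
        exact h1 v hv
      · rintro _ ⟨u, hu, rfl⟩ _ ⟨v, hv, rfl⟩ huv
        rw [f.injective.extend_apply, f.injective.extend_apply]
        exact h2 u hu v hv (f.map_rel_iff.1 huv)
  constructor
  · intro h s hs k hk
    exact (hcol s k).1 (h _ (Set.image_mono hs) k ((hcl s k).2 hk))
  · intro h s hs k hk
    obtain ⟨s', hs', rfl⟩ := Set.subset_image_iff.1 hs
    exact (hcol s' k).2 (h s' hs' k ((hcl s' k).1 hk))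

lemma isPerfect_induce_iff (A : Set V) : IsPerfect (G.induce A) ↔ PerfOn G A := by
  classical
  have hA : Set.range (Embedding.induce (G := G) A) = A := Subtype.range_coe
  rw [isPerfect_iff, ← perfOn_image (Embedding.induce A), Set.image_univ, hA]

variable (G) in
/-- The conclusion of perfect weight divisibility for the weights `w` and the vertex set `s`. -/
def DivOn (w : V → ℕ) (s : Set V) : Prop :=
  ∃ P W : Set V, P ∪ W = s ∧ P ∩ W = ∅ ∧ PerfOn G P ∧ wCliqueNumOn G w W < wCliqueNumOn G w s

variable (G) in
lemma pwd_iff : PerfectlyWeightDivisible G ↔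
    ∀ w : V → ℕ, (∀ v, 0 < w v) → ∀ s : Set V, s.Nonempty → DivOn G w s := by
  simp only [PerfectlyWeightDivisible, DivOn, isPerfect_induce_iff]

lemma divOn_image {W : Type*} [Fintype W] {H : SimpleGraph W} (f : H ↪g G) {w : V → ℕ}
    {s : Set W} (h : DivOn H (w ∘ f) s) : DivOn G w (f '' s) := by
  obtain ⟨P, Q, hPQ, hdis, hP, hlt⟩ := h
  refine ⟨f '' P, f '' Q, ?_, ?_, (perfOn_image f P).2 hP, ?_⟩
  · rw [← Set.image_union, hPQ]
  · rw [← Set.image_inter f.injective, hdis, Set.image_empty]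
  · rwa [wClique_image, wClique_image]

end Weights

/-! ### Substitution into a vertex of a perfect graph -/

/-- Weighted colouring of a perfect graph: if all cliques have weight at most `k`, each vertex `v`
can be given a set of `w v` out of `k` colours so that adjacent vertices get disjoint sets. The
proof lowers one weight above `1`, picks a colour `i` used there, and removes the colour class
of `i`. -/
lemma PerfOn.weighted {V : Type*} [Fintype V] {G : SimpleGraph V} {A : Set V} (h : PerfOn G A) :
    ∀ (n : ℕ) (w : V → ℕ), ∑ v, w v ≤ n → ∀ k,
      (∀ t : Finset V, ↑t ⊆ A → G.IsClique (↑t : Set V) → ∑ v ∈ t, w v ≤ k) →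
      ∃ c : V → Finset ℕ, (∀ v ∈ A, c v ⊆ Finset.range k ∧ (c v).card = w v) ∧
        ∀ u ∈ A, ∀ v ∈ A, G.Adj u v → Disjoint (c u) (c v) := by
  classical
  intro n
  induction n using Nat.strong_induction_on with
  | _ n ih =>
  intro w hn k hk
  by_cases hw : ∀ v ∈ A, w v ≤ 1
  · obtain ⟨f, hf1, hf2⟩ := h {v | v ∈ A ∧ w v = 1} (fun v hv => hv.1) k (by
      intro t hts ht
      have h1 := hk t (fun v hv => (hts hv).1) ht
      rwa [Finset.sum_congr rfl (fun v hv => (hts hv).2 : ∀ v ∈ t, w v = 1), Finset.sum_const,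
        smul_eq_mul, mul_one] at h1)
    refine ⟨fun v => if w v = 1 then {f v} else ∅, fun v hv => ?_, fun u hu v hv huv => ?_⟩
    · have := hw v hv
      by_cases e : w v = 1
      · simp [e, hf1 v ⟨hv, e⟩]
      · simp only [e, if_false, Finset.empty_subset, Finset.card_empty, true_and]
        omega
    · by_cases eu : w u = 1 <;> by_cases ev : w v = 1 <;> simp [eu, ev]
      exact hf2 u ⟨hu, eu⟩ v ⟨hv, ev⟩ huv
  · push Not at hw
    obtain ⟨x, hxA, hx⟩ := hw
    let w1 : V → ℕ := Function.update w x (w x - 1)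
    have hw1x : w1 x = w x - 1 := Function.update_self ..
    have hw1 : ∀ v, v ≠ x → w1 v = w v := fun v hv => Function.update_of_ne hv _ _
    have hw1le : ∀ v, w1 v ≤ w v := fun v => by
      by_cases e : v = x
      · subst e; omega
      · exact (hw1 v e).le
    have hlt1 : ∑ v, w1 v < ∑ v, w v :=
      Finset.sum_lt_sum (fun v _ => hw1le v) ⟨x, Finset.mem_univ x, by omega⟩
    obtain ⟨c, hc1, hc2⟩ := ih _ (hlt1.trans_le hn) w1 le_rfl k fun t hts ht =>
      (Finset.sum_le_sum fun v _ => hw1le v).trans (hk t hts ht)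
    obtain ⟨i, hi⟩ : (c x).Nonempty := by
      rw [← Finset.card_pos, (hc1 x hxA).2]
      omega
    have hik : i < k := Finset.mem_range.1 ((hc1 x hxA).1 hi)
    have hpos : ∀ v ∈ A, i ∈ c v → 0 < w v := fun v hv hiv =>
      lt_of_lt_of_le (((hc1 v hv).2 ▸ Finset.card_pos.2 ⟨i, hiv⟩)) (hw1le v)
    let w2 : V → ℕ := fun v => if v ∈ A ∧ i ∈ c v then w v - 1 else w v
    have hw2le : ∀ v, w2 v ≤ w v := fun v => by
      simp only [w2]
      split_ifs <;> omega
    have hw2lt : ∀ v ∈ A, i ∈ c v → w2 v < w v := fun v hv hiv => by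
      have := hpos v hv hiv
      simp only [w2, hv, hiv, and_self, if_true]
      omega
    have hlt2 : ∑ v, w2 v < ∑ v, w v :=
      Finset.sum_lt_sum (fun v _ => hw2le v) ⟨x, Finset.mem_univ x, hw2lt x hxA hi⟩
    obtain ⟨d, hd1, hd2⟩ := ih _ (hlt2.trans_le hn) w2 le_rfl (k - 1) (by
      intro t hts ht
      by_cases hS : ∃ v ∈ t, i ∈ c v
      · obtain ⟨v, hvt, hiv⟩ := hS
        have h1 : ∑ v ∈ t, w2 v < ∑ v ∈ t, w v :=
          Finset.sum_lt_sum (fun v _ => hw2le v) ⟨v, hvt, hw2lt v (hts hvt) hiv⟩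
        have := hk t hts ht
        omega
      · -- the disjoint colour sets of the clique avoid the colour `i`
        push Not at hS
        have hxt : x ∉ t := fun e => hS x e hi
        have h1 : ∑ v ∈ t, w2 v ≤ ∑ v ∈ t, (c v).card := Finset.sum_le_sum fun v hv => by
          rw [(hc1 v (hts hv)).2, hw1 v fun e => hxt (e ▸ hv)]
          exact hw2le v
        have h2 : (t.biUnion c).card = ∑ v ∈ t, (c v).card :=
          Finset.card_biUnion fun u hu v hv huv => hc2 u (hts hu) v (hts hv) (ht hu hv huv)
        have h3 : t.biUnion c ⊆ (Finset.range k).erase i := by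
          intro j hj
          obtain ⟨v, hv, hjv⟩ := Finset.mem_biUnion.1 hj
          exact Finset.mem_erase.2 ⟨fun e => hS v hv (e ▸ hjv), (hc1 v (hts hv)).1 hjv⟩
        have h4 := Finset.card_le_card h3
        rw [Finset.card_erase_of_mem (Finset.mem_range.2 hik), Finset.card_range] at h4
        omega)
    have hnot : ∀ v ∈ A, k - 1 ∉ d v := fun v hv e => by
      have := Finset.mem_range.1 ((hd1 v hv).1 e)
      omega
    refine ⟨fun v => if i ∈ c v then insert (k - 1) (d v) else d v, fun v hv => ?_,
      fun u hu v hv huv => ?_⟩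
    · obtain ⟨h1, h2⟩ := hd1 v hv
      have h3 : d v ⊆ Finset.range k := h1.trans (Finset.range_subset_range.2 (Nat.sub_le k 1))
      by_cases e : i ∈ c v
      · have := hpos v hv e
        simp only [e, if_true]
        refine ⟨Finset.insert_subset (Finset.mem_range.2 (by omega)) h3, ?_⟩
        rw [Finset.card_insert_of_notMem (hnot v hv), h2]
        simp only [w2, hv, e, and_self, if_true]
        omega
      · simp only [e, if_false]
        refine ⟨h3, ?_⟩
        rw [h2]
        simp [w2, e]
    · have h1 := hd2 u hu v hv huv
      have h2 := hc2 u hu v hv huv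
      have h3 := hnot u hu
      have h4 := hnot v hv
      by_cases eu : i ∈ c u <;> by_cases ev : i ∈ c v
      · exact absurd ev (Finset.disjoint_left.1 h2 eu)
      · simp [eu, ev, h1, h4]
      · simp [eu, ev, h1, h3]
      · simp [eu, ev, h1]

/-- Replacing the vertex `x₀` of a perfect graph by the perfect graph on `R`, where `X` is
homogeneous, gives a perfect graph. -/
lemma PerfOn.substitute {V : Type*} [Fintype V] {G : SimpleGraph V} {X P R : Set V} {x₀ : V}
    (hx₀ : x₀ ∈ X) (hom : ∀ u, u ∉ X → ∀ a ∈ X, ∀ b ∈ X, G.Adj u a → G.Adj u b)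
    (hP : PerfOn G P) (hxP : x₀ ∈ P) (hPX : ∀ v ∈ P, v ∈ X → v = x₀)
    (hR : PerfOn G R) (hRX : R ⊆ X) : PerfOn G (P \ {x₀} ∪ R) := by
  classical
  intro s hs k hk
  have hsR : ∀ v ∈ s, v ∈ X → v ∈ R := fun v hv hvX =>
    (hs hv).resolve_left fun e => e.2 (hPX v e.1 hvX)
  have hsP : ∀ v ∈ s, v ∉ X → v ∈ P := fun v hv hvX =>
    ((hs hv).resolve_right fun e => hvX (hRX e)).1
  obtain ⟨T, hTs, hT, hTm⟩ := exists_wClique G (fun _ => 1) (s ∩ X)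
  set m := wCliqueNumOn G (fun _ => 1) (s ∩ X) with hm
  have hTm' : T.card = m := by simpa using hTm
  obtain ⟨f, hf1, hf2⟩ := hR (s ∩ X) (fun v hv => hsR v hv.1 hv.2) m
    ((card_le_iff (s ∩ X) m).2 le_rfl)
  let A : Set V := insert x₀ (s \ X)
  have hAP : A ⊆ P := by
    rintro v (rfl | hv)
    · exact hxP
    · exact hsP v hv.1 hv.2
  let w : V → ℕ := fun v => if v = x₀ then m else 1
  have hwx : w x₀ = m := if_pos rfl
  have hw : ∀ v, v ≠ x₀ → w v = 1 := fun v hv => if_neg hv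
  have hA : ∀ v ∈ A, v ≠ x₀ → v ∈ s ∧ v ∉ X := fun v hv hne => hv.resolve_left hne
  obtain ⟨c, hc1, hc2⟩ := (hP.mono hAP).weighted _ w le_rfl k (by
    intro t hts ht
    by_cases hxt : x₀ ∈ t
    · -- replace `x₀` by a maximum clique of `s ∩ X`
      have hmem : ∀ v ∈ t.erase x₀, v ∈ s ∧ v ∉ X := fun v hv =>
        hA v (hts (Finset.mem_of_mem_erase hv)) (Finset.ne_of_mem_erase hv)
      have hadj : ∀ v ∈ t.erase x₀, ∀ y ∈ T, G.Adj v y := fun v hv y hy =>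
        hom v (hmem v hv).2 x₀ hx₀ y (hTs hy).2
          (ht (Finset.mem_of_mem_erase hv) hxt (Finset.ne_of_mem_erase hv))
      have hdis : Disjoint (t.erase x₀) T := Finset.disjoint_left.2 fun v hv hvT =>
        (hmem v hv).2 (hTs hvT).2
      have hcard := hk (t.erase x₀ ∪ T) (by
        intro v hv
        rcases Finset.mem_union.1 (Finset.mem_coe.1 hv) with e | e
        · exact (hmem v e).1
        · exact (hTs e).1) (by
        intro u hu v hv huv
        rcases Finset.mem_union.1 (Finset.mem_coe.1 hu) with e | e <;>
          rcases Finset.mem_union.1 (Finset.mem_coe.1 hv) with e' | e'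
        · exact ht (Finset.mem_of_mem_erase e) (Finset.mem_of_mem_erase e') huv
        · exact hadj u e v e'
        · exact (hadj v e' u e).symm
        · exact hT e e' huv)
      rw [Finset.card_union_of_disjoint hdis, hTm'] at hcard
      rw [← Finset.add_sum_erase t w hxt, hwx,
        Finset.sum_congr rfl fun v hv => hw v (Finset.ne_of_mem_erase hv), Finset.sum_const,
        smul_eq_mul, mul_one]
      omega
    · have hne : ∀ v ∈ t, v ≠ x₀ := fun v hv e => hxt (e ▸ hv)
      rw [Finset.sum_congr rfl fun v hv => hw v (hne v hv), Finset.sum_const, smul_eq_mul, mul_one]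
      exact hk t (fun v hv => (hA v (hts hv) (hne v hv)).1) ht)
  have hxA : x₀ ∈ A := Set.mem_insert _ _
  obtain ⟨hcx1, hcx2⟩ := hc1 x₀ hxA
  rw [hwx] at hcx2
  let e := (c x₀).orderEmbOfFin hcx2
  have hs2 : ∀ v ∈ s, v ∉ X → v ∈ A ∧ v ≠ x₀ := fun v hv hvX =>
    ⟨Set.mem_insert_of_mem _ ⟨hv, hvX⟩, fun e => hvX (e ▸ hx₀)⟩
  have hg : ∀ v, ∃ j, v ∈ s → v ∉ X → c v = {j} := by
    intro v
    by_cases hv : v ∈ s ∧ v ∉ X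
    · obtain ⟨h1, h2⟩ := hs2 v hv.1 hv.2
      obtain ⟨j, hj⟩ := Finset.card_eq_one.1 ((hc1 v h1).2.trans (hw v h2))
      exact ⟨j, fun _ _ => hj⟩
    · exact ⟨0, fun h1 h2 => absurd ⟨h1, h2⟩ hv⟩
  choose g hg using hg
  have hgm : ∀ v ∈ s, v ∉ X → g v ∈ c v := fun v h1 h2 => by simp [hg v h1 h2]
  let col : V → ℕ := fun v =>
    if v ∈ X then (if h : f v < m then e ⟨f v, h⟩ else 0) else g v
  have hcolX : ∀ v (hv : v ∈ s ∩ X), col v = e ⟨f v, hf1 v hv⟩ := fun v hv => by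
    simp only [col, hv.2, if_true, hf1 v hv, dif_pos]
  have hcolX' : ∀ v (hv : v ∈ s ∩ X), col v ∈ c x₀ := fun v hv => by
    rw [hcolX v hv]
    exact Finset.orderEmbOfFin_mem _ _ _
  have hcolY : ∀ v, v ∉ X → col v = g v := fun v hv => if_neg hv
  have hcross : ∀ u ∈ s, u ∉ X → ∀ v ∈ s, v ∈ X → G.Adj u v → col u ≠ col v := by
    intro u hu huX v hv hvX huv heq
    obtain ⟨h1, h2⟩ := hs2 u hu huX
    have hd := hc2 u h1 x₀ hxA (hom u huX v hvX x₀ hx₀ huv)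
    have h3 := hgm u hu huX
    rw [← hcolY u huX, heq] at h3
    exact Finset.disjoint_left.1 hd h3 (hcolX' v ⟨hv, hvX⟩)
  refine ⟨col, fun v hv => ?_, fun u hu v hv huv => ?_⟩
  · by_cases hvX : v ∈ X
    · exact Finset.mem_range.1 (hcx1 (hcolX' v ⟨hv, hvX⟩))
    · rw [hcolY v hvX]
      exact Finset.mem_range.1 ((hc1 v (hs2 v hv hvX).1).1 (hgm v hv hvX))
  · by_cases huX : u ∈ X <;> by_cases hvX : v ∈ X
    · rw [hcolX u ⟨hu, huX⟩, hcolX v ⟨hv, hvX⟩]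
      intro heq
      exact hf2 u ⟨hu, huX⟩ v ⟨hv, hvX⟩ huv (Fin.mk.inj_iff.1 (e.injective heq))
    · exact (hcross v hv hvX u hu huX huv.symm).symm
    · exact hcross u hu huX v hv hvX huv
    · rw [hcolY u huX, hcolY v hvX]
      intro heq
      have h1 := hgm u hu huX
      rw [heq] at h1
      exact Finset.disjoint_left.1 (hc2 u (hs2 u hu huX).1 v (hs2 v hv hvX).1 huv) h1
        (hgm v hv hvX)

/-! ### Reduction to prime graphs -/

section Reduction

variable {V : Type*} [Fintype V] {G : SimpleGraph V}

/-- If the non-neighbours of `v` form a clique, they induce a perfect graph together with `v`, and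
`v` increases the weight of every clique among its neighbours. -/
lemma divOn_of_clique_antiNbhd {w : V → ℕ} (hw : ∀ v, 0 < w v) (v : V)
    (hv : ∀ a b, a ≠ v → b ≠ v → ¬ G.Adj v a → ¬ G.Adj v b → a ≠ b → G.Adj a b) :
    DivOn G w Set.univ := by
  classical
  refine ⟨{a | ¬ G.Adj v a}, {a | G.Adj v a}, ?_, ?_, ?_, ?_⟩
  · ext a
    simp [or_comm, em]
  · ext a
    simp
  · intro s hs k hk
    let T : Finset V := Finset.univ.filter fun a => a ∈ s ∧ a ≠ v
    have hT : ∀ a, a ∈ T ↔ a ∈ s ∧ a ≠ v := fun a => by simp [T]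
    have hTk : T.card ≤ k := hk T (fun a ha => ((hT a).1 ha).1) fun a ha b hb hab =>
      hv a b ((hT a).1 ha).2 ((hT b).1 hb).2 (hs ((hT a).1 ha).1) (hs ((hT b).1 hb).1) hab
    refine ⟨fun a => if h : a ∈ T then (T.equivFin ⟨a, h⟩ : ℕ) else 0, fun a ha => ?_,
      fun a ha b hb hab => ?_⟩
    · by_cases h : a ∈ T
      · simp only [h, dif_pos]
        exact (T.equivFin ⟨a, h⟩).2.trans_le hTk
      · simp only [h, dif_neg, not_false_eq_true]
        have := hk {a} (by simpa using ha) (by simp)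
        rw [Finset.card_singleton] at this
        exact this
    · have hav : a ≠ v := by
        rintro rfl
        exact hs hb hab
      have hbv : b ≠ v := by
        rintro rfl
        exact hs ha hab.symm
      have haT := (hT a).2 ⟨ha, hav⟩
      have hbT := (hT b).2 ⟨hb, hbv⟩
      simp only [haT, hbT, dif_pos]
      intro e
      have := T.equivFin.injective (Fin.ext e)
      exact hab.ne (congrArg Subtype.val this)
  · refine wClique_lt w fun t hts ht => ?_
    have hvt : v ∉ t := fun e => G.irrefl (hts e)
    have := le_wClique (G := G) w (s := Set.univ) (t := insert v t) (Set.subset_univ _) (by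
      rw [Finset.coe_insert]
      exact ht.insert fun b hb _ => hts hb)
    rw [Finset.sum_insert hvt] at this
    have := hw v
    omega

/-- Perfect weight divisibility is preserved by substitution: a partition for `G` is obtained from
one for a homogeneous set `X`, and one for the graph where `X` is shrunk to a vertex `x₀` that
carries the maximum weight of a clique of `X`. -/
lemma divOn_of_homogeneous {w : V → ℕ} (hw : ∀ v, 0 < w v) {X : Set V} (hX : X.Nontrivial)
    (hXu : X ≠ Set.univ) (hom : ∀ u, u ∉ X → ∀ a ∈ X, ∀ b ∈ X, G.Adj u a → G.Adj u b)
    (ih : ∀ w : V → ℕ, (∀ v, 0 < w v) → ∀ s : Set V, s ≠ Set.univ → s.Nonempty → DivOn G w s) :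
    DivOn G w Set.univ := by
  classical
  obtain ⟨x₀, hx₀, x₁, hx₁, hne⟩ := id hX
  set m := wCliqueNumOn G w X with hm
  have hm0 : 0 < m := by
    have := le_wClique (G := G) w (s := X) (t := {x₀}) (by simpa using hx₀) (by simp)
    rw [Finset.sum_singleton] at this
    exact (hw x₀).trans_le this
  let w' : V → ℕ := fun v => if v = x₀ then m else w v
  have hw'x : w' x₀ = m := if_pos rfl
  have hw' : ∀ v, v ≠ x₀ → w' v = w v := fun v hv => if_neg hv
  let Y : Set V := {v | v ∈ X → v = x₀}
  have hx₀Y : x₀ ∈ Y := fun _ => rfl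
  have hYu : Y ≠ Set.univ := fun e => hne.symm ((e ▸ Set.mem_univ x₁ : x₁ ∈ Y) hx₁)
  obtain ⟨P, W, hPW, hdis, hP, hlt⟩ := ih w' (fun v => by
    by_cases e : v = x₀
    · rw [e, hw'x]; exact hm0
    · rw [hw' v e]; exact hw v) Y hYu ⟨x₀, hx₀Y⟩
  obtain ⟨R, S, hRS, hRSd, hR, hlt'⟩ := ih w hw X hXu hX.nonempty
  have hPY : ∀ v ∈ P, v ∈ X → v = x₀ := fun v hv => (hPW ▸ Or.inl hv : v ∈ Y)
  have hWY : ∀ v ∈ W, v ∈ X → v = x₀ := fun v hv => (hPW ▸ Or.inr hv : v ∈ Y)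
  have hY : ∀ v, v ∉ X → v ∈ P ∨ v ∈ W := fun v hv =>
    (hPW ▸ (fun e => absurd e hv : v ∈ Y) : v ∈ P ∪ W)
  have hPWn : ∀ v, v ∈ P → v ∉ W := fun v h1 h2 => (hdis ▸ ⟨h1, h2⟩ : v ∈ (∅ : Set V))
  have hRSn : ∀ v, v ∈ R → v ∉ S := fun v h1 h2 => (hRSd ▸ ⟨h1, h2⟩ : v ∈ (∅ : Set V))
  have hRX : ∀ v ∈ R, v ∈ X := fun v hv => hRS ▸ Or.inl hv
  have hSX : ∀ v ∈ S, v ∈ X := fun v hv => hRS ▸ Or.inr hv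
  have hXRS : ∀ v ∈ X, v ∈ R ∨ v ∈ S := fun v hv => (hRS ▸ hv : v ∈ R ∪ S)
  -- the shrunken graph has no heavier clique than `G`
  have hlift : wCliqueNumOn G w' Y ≤ wCliqueNumOn G w Set.univ := by
    obtain ⟨t, hts, ht, e⟩ := exists_wClique G w' Y
    rw [← e]
    by_cases hxt : x₀ ∈ t
    · obtain ⟨T, hTX, hT, hTm⟩ := exists_wClique G w X
      have hmem : ∀ v ∈ t.erase x₀, v ∉ X := fun v hv hvX =>
        Finset.ne_of_mem_erase hv (hts (Finset.mem_of_mem_erase hv) hvX)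
      have hadj : ∀ v ∈ t.erase x₀, ∀ y ∈ T, G.Adj v y := fun v hv y hy =>
        hom v (hmem v hv) x₀ hx₀ y (hTX hy)
          (ht (Finset.mem_of_mem_erase hv) hxt (Finset.ne_of_mem_erase hv))
      have hdis : Disjoint (t.erase x₀) T := Finset.disjoint_left.2 fun v hv hvT =>
        hmem v hv (hTX hvT)
      have := le_wClique (G := G) w (s := Set.univ) (t := t.erase x₀ ∪ T) (Set.subset_univ _) (by
        intro u hu v hv huv
        rcases Finset.mem_union.1 (Finset.mem_coe.1 hu) with e | e <;>
          rcases Finset.mem_union.1 (Finset.mem_coe.1 hv) with e' | e'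
        · exact ht (Finset.mem_of_mem_erase e) (Finset.mem_of_mem_erase e') huv
        · exact hadj u e v e'
        · exact (hadj v e' u e).symm
        · exact hT e e' huv)
      rw [Finset.sum_union hdis, hTm] at this
      have hsum : ∑ v ∈ t.erase x₀, w' v = ∑ v ∈ t.erase x₀, w v :=
        Finset.sum_congr rfl fun v hv => hw' v (Finset.ne_of_mem_erase hv)
      rw [← Finset.add_sum_erase t w' hxt, hw'x, hsum, Nat.add_comm]
      exact this
    · have hsum : ∑ v ∈ t, w' v = ∑ v ∈ t, w v :=
        Finset.sum_congr rfl fun v hv => hw' v fun e => hxt (e ▸ hv)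
      rw [hsum]
      exact le_wClique w (Set.subset_univ _) ht
  -- shrinking the part of a clique `t` inside `X` to `x₀`
  have hshrink : ∀ t : Finset V, G.IsClique (↑t : Set V) → (∃ v ∈ t, v ∈ X) →
      G.IsClique (↑(insert x₀ (t.filter (· ∉ X))) : Set V) ∧
      ∑ v ∈ insert x₀ (t.filter (· ∉ X)), w' v = m + ∑ v ∈ t.filter (· ∉ X), w v ∧
      ∑ v ∈ t, w v = ∑ v ∈ t.filter (· ∈ X), w v + ∑ v ∈ t.filter (· ∉ X), w v := by
    rintro t ht ⟨y, hyt, hyX⟩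
    have hmem : ∀ v, v ∈ t.filter (· ∉ X) ↔ v ∈ t ∧ v ∉ X := fun v => Finset.mem_filter
    have hx : x₀ ∉ t.filter (· ∉ X) := fun e => ((hmem _).1 e).2 hx₀
    refine ⟨?_, ?_, (Finset.sum_filter_add_sum_filter_not t (· ∈ X) w).symm⟩
    · rw [Finset.coe_insert]
      refine IsClique.insert (ht.subset fun v hv => ((hmem v).1 hv).1) fun v hv _ => ?_
      obtain ⟨h1, h2⟩ := (hmem v).1 hv
      exact (hom v h2 y hyX x₀ hx₀ (ht h1 hyt fun e => h2 (e ▸ hyX))).symm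
    · rw [Finset.sum_insert hx, hw'x,
        Finset.sum_congr rfl fun v hv => hw' v fun e => hx (e ▸ hv)]
  have hout : ∀ t : Finset V, ↑t ⊆ W → (∀ v ∈ t, v ∉ X) → G.IsClique (↑t : Set V) →
      ∑ v ∈ t, w v < wCliqueNumOn G w' Y := by
    intro t hts htX ht
    rw [← Finset.sum_congr rfl fun v hv => hw' v fun e => htX v hv (e ▸ hx₀)]
    exact (le_wClique w' hts ht).trans_lt hlt
  by_cases hxP : x₀ ∈ P
  · refine ⟨P \ {x₀} ∪ R, W ∪ S, ?_, ?_, hP.substitute hx₀ hom hxP hPY hR hRX,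
      (wClique_lt w fun t hts ht => ?_).trans_le hlift⟩
    · ext v
      simp only [Set.mem_union, Set.mem_sdiff, Set.mem_singleton_iff, Set.mem_univ, iff_true]
      by_cases hvX : v ∈ X
      · exact (hXRS v hvX).imp Or.inr Or.inr
      · exact (hY v hvX).imp (fun h => Or.inl ⟨h, fun e => hvX (e ▸ hx₀)⟩) Or.inl
    · ext v
      simp only [Set.mem_inter_iff, Set.mem_union, Set.mem_sdiff, Set.mem_singleton_iff,
        Set.mem_empty_iff_false, iff_false]
      rintro ⟨⟨hvP, hvx⟩ | hvR, hvW | hvS⟩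
      · exact hPWn v hvP hvW
      · exact hvx (hPY v hvP (hSX v hvS))
      · exact hPWn x₀ hxP (hWY v hvW (hRX v hvR) ▸ hvW)
      · exact hRSn v hvR hvS
    · by_cases htX : ∃ v ∈ t, v ∈ X
      · obtain ⟨h1, h2, h3⟩ := hshrink t ht htX
        have h4 := le_wClique w' (s := Y) (by
          intro v hv hvX
          rw [Finset.coe_insert] at hv
          exact hv.resolve_right fun e => (Finset.mem_filter.1 e).2 hvX) h1
        have h5 : ∑ v ∈ t.filter (· ∈ X), w v < m := by
          refine (le_wClique (G := G) w (s := S) ?_ (ht.subset ?_)).trans_lt hlt'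
          · intro v hv
            obtain ⟨hv1, hv2⟩ := Finset.mem_filter.1 hv
            exact (hts hv1).resolve_left fun e => hPWn x₀ hxP (hWY v e hv2 ▸ e)
          · exact Finset.coe_subset.2 (Finset.filter_subset _ _)
        omega
      · push Not at htX
        exact hout t (fun v hv => (hts hv).resolve_right fun e => htX v hv (hSX v e)) htX ht
  · have hxW : x₀ ∈ W := (hPW ▸ hx₀Y : x₀ ∈ P ∪ W).resolve_left hxP
    have hPX : ∀ v ∈ P, v ∉ X := fun v hv hvX => hxP (hPY v hv hvX ▸ hv)
    refine ⟨P, W ∪ X, ?_, ?_, hP, (wClique_lt w fun t hts ht => ?_).trans_le hlift⟩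
    · ext v
      simp only [Set.mem_union, Set.mem_univ, iff_true]
      by_cases hvX : v ∈ X
      · exact Or.inr (Or.inr hvX)
      · exact (hY v hvX).imp id Or.inl
    · ext v
      simp only [Set.mem_inter_iff, Set.mem_union, Set.mem_empty_iff_false, iff_false]
      rintro ⟨hvP, hvW | hvX⟩
      · exact hPWn v hvP hvW
      · exact hPX v hvP hvX
    · by_cases htX : ∃ v ∈ t, v ∈ X
      · obtain ⟨h1, h2, h3⟩ := hshrink t ht htX
        have h4 := le_wClique w' (s := W) (by
          intro v hv
          rw [Finset.coe_insert] at hv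
          rcases hv with rfl | hv
          · exact hxW
          · obtain ⟨hv1, hv2⟩ := Finset.mem_filter.1 hv
            exact (hts hv1).resolve_right hv2) h1
        have h5 : ∑ v ∈ t.filter (· ∈ X), w v ≤ m := by
          refine le_wClique (G := G) w (s := X) ?_ (ht.subset ?_)
          · exact fun v hv => (Finset.mem_filter.1 hv).2
          · exact Finset.coe_subset.2 (Finset.filter_subset _ _)
        omega
      · push Not at htX
        exact hout t (fun v hv => (hts hv).resolve_right (htX v hv)) htX ht

end Reduction

/-- In a hereditary class whose triangle-free members are perfectly weight divisible, it suffices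
to find, in prime members with a triangle, a vertex whose non-neighbours form a clique. -/
lemma pwd_of_prime (Q : ∀ (V : Type) [Fintype V], SimpleGraph V → Prop)
    (hered : ∀ (V W : Type) [Fintype V] [Fintype W] (G : SimpleGraph V) (H : SimpleGraph W),
      Q V G → ContainsInduced G H → Q W H)
    (htri : ∀ (V : Type) [Fintype V] (G : SimpleGraph V),
      Q V G → IsFree G (cycleGraph 3) → PerfectlyWeightDivisible G)
    (hprime : ∀ (V : Type) [Fintype V] (G : SimpleGraph V), Q V G → PrimeGraph G →
      ¬ IsFree G (cycleGraph 3) →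
      ∃ v, ∀ a b, a ≠ v → b ≠ v → ¬ G.Adj v a → ¬ G.Adj v b → a ≠ b → G.Adj a b) :
    ∀ (n : ℕ) (V : Type) [Fintype V] (G : SimpleGraph V), Fintype.card V = n → Q V G →
      PerfectlyWeightDivisible G := by
  classical
  intro n
  induction n using Nat.strong_induction_on with
  | _ n ih =>
  intro V _ G hn hQ
  rw [pwd_iff]
  have ih' : ∀ w : V → ℕ, (∀ v, 0 < w v) → ∀ s : Set V, s ≠ Set.univ → s.Nonempty →
      DivOn G w s := by
    intro w hw s hs hsn
    have : Nonempty s := hsn.to_subtype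
    have hcard : Fintype.card s < n := by
      obtain ⟨x, hx⟩ := (Set.ne_univ_iff_exists_notMem s).1 hs
      exact hn ▸ Fintype.card_subtype_lt hx
    have h1 := ih _ hcard s (G.induce s) rfl (hered V s G _ hQ (ContainsInduced.induce G s))
    have h2 := divOn_image (Embedding.induce (G := G) s)
      ((pwd_iff _).1 h1 (w ∘ Embedding.induce (G := G) s) (fun v => hw _) Set.univ
        Set.univ_nonempty)
    have hA : Set.range (Embedding.induce (G := G) s) = s := Subtype.range_coe
    rwa [Set.image_univ, hA] at h2
  intro w hw s hsn
  by_cases hs : s = Set.univ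
  · subst hs
    by_cases hfree : IsFree G (cycleGraph 3)
    · exact (pwd_iff G).1 (htri V G hQ hfree) w hw _ hsn
    by_cases hpr : PrimeGraph G
    · obtain ⟨v, hv⟩ := hprime V G hQ hpr hfree
      exact divOn_of_clique_antiNbhd hw v hv
    · simp only [PrimeGraph] at hpr
      push Not at hpr
      obtain ⟨X, hX, hXu, hom⟩ := hpr
      refine divOn_of_homogeneous hw hX hXu (fun u hu a ha b hb hua => ?_) ih'
      exact hom u hu ⟨a, ha, hua⟩ b hb
  · exact ih' w hw s hs hsn

lemma PrimeGraph.compl {V : Type*} {G : SimpleGraph V} (h : PrimeGraph G) : PrimeGraph Gᶜ := by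
  intro X hX hXu
  obtain ⟨u, hu, ⟨a, ha, hua⟩, b, hb, hub⟩ := h X hX hXu
  refine ⟨u, hu, ⟨b, hb, ?_⟩, a, ha, ?_⟩
  · rw [compl_adj]
    exact ⟨fun e => hu (e ▸ hb), hub⟩
  · rw [compl_adj]
    exact fun e => e.2 hua

/-- A prime (bull, house)-free or (bull, hammer)-free graph with a triangle has a vertex whose
non-neighbours form a clique. -/
lemma exists_clique_antiNbhd {V : Type*} {G : SimpleGraph V} (hp : PrimeGraph G)
    (hb : IsFree G bull) (hX : IsFree G house ∨ IsFree G hammer)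
    (hT : ¬ IsFree G (cycleGraph 3)) :
    ∃ v, ∀ a b, a ≠ v → b ≠ v → ¬ G.Adj v a → ¬ G.Adj v b → a ≠ b → G.Adj a b := by
  obtain ⟨f, hf⟩ := not_not.1 hT
  rw [cycleGraph_three_eq_top] at hf
  have hadj : ∀ i j, i ≠ j → G.Adj (f i) (f j) := fun i j hij => (hf i j).2 hij
  obtain ⟨q, hq⟩ := exists_stable_nbhd hp.compl (noBull_compl hb)
    (hX.imp noP5_compl noBanner_compl)
    ⟨f 0, f 1, f 2, f.injective.ne (by decide), f.injective.ne (by decide),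
      f.injective.ne (by decide), fun e => e.2 (hadj 0 1 (by decide)),
      fun e => e.2 (hadj 0 2 (by decide)), fun e => e.2 (hadj 1 2 (by decide))⟩
  refine ⟨q, fun a b ha hb hqa hqb hab => ?_⟩
  by_contra hnab
  exact hq a b (by simp [ha.symm, hqa]) (by simp [hb.symm, hqb]) (by simp [hab, hnab])

/-- For `H` one of house, hammer, `𝒞` the class of (bull, H)-free graphs and `𝒢` a
hereditary class, every graph in `𝒢 ∩ 𝒞` is perfectly weight divisible if and only if
every triangle-free graph in `𝒢` is perfectly weight divisible. -/
theorem bull_H_free_perfectlyWeightDivisible_iff_triangleFree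
    {β : Type} [Fintype β] (H : SimpleGraph β)
    (hH : Nonempty (H ≃g house) ∨ Nonempty (H ≃g hammer))
    (𝒢 : ∀ (V : Type) [Fintype V], SimpleGraph V → Prop)
    (hered : ∀ (V W : Type) [Fintype V] [Fintype W] (G : SimpleGraph V) (H' : SimpleGraph W),
        𝒢 V G → ContainsInduced G H' → 𝒢 W H') :
    (∀ (V : Type) [Fintype V] (G : SimpleGraph V),
        𝒢 V G → IsFree G bull → IsFree G H → PerfectlyWeightDivisible G) ↔
    (∀ (V : Type) [Fintype V] (G : SimpleGraph V),
        𝒢 V G → IsFree G (SimpleGraph.cycleGraph 3) → PerfectlyWeightDivisible G) := by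
  have hH' : ∀ (V : Type) (G : SimpleGraph V), IsFree G H → IsFree G house ∨ IsFree G hammer := by
    intro V G hG
    rcases hH with ⟨⟨e⟩⟩ | ⟨⟨e⟩⟩
    · exact Or.inl fun h => hG (h.trans (ContainsInduced.of_iso e.symm))
    · exact Or.inr fun h => hG (h.trans (ContainsInduced.of_iso e.symm))
  have hHT : ContainsInduced H (cycleGraph 3) := by
    rcases hH with ⟨⟨e⟩⟩ | ⟨⟨e⟩⟩
    · exact (ContainsInduced.of_iso e).trans triangle_of_house
    · exact (ContainsInduced.of_iso e).trans triangle_of_hammer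
  constructor
  · intro h V _ G hG hfree
    exact h V G hG (fun e => hfree (e.trans triangle_of_bull)) fun e => hfree (e.trans hHT)
  · intro h V _ G hG hbull hGH
    refine pwd_of_prime (fun V _ G => 𝒢 V G ∧ IsFree G bull ∧ IsFree G H) ?_ ?_ ?_ _ V G rfl
      ⟨hG, hbull, hGH⟩
    · rintro V W _ _ G L ⟨h1, h2, h3⟩ hL
      exact ⟨hered V W G L h1 hL, fun e => h2 (hL.trans e), fun e => h3 (hL.trans e)⟩
    · exact fun V _ G hQ => h V G hQ.1
    · rintro V _ G ⟨-, h2, h3⟩ hp hT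
      exact exists_clique_antiNbhd hp h2 (hH' V G h3) hT
end

section
/- Let G be a 4K1-free minimally non-perfectly weight divisible graph. Then G has no clique cutset, i.e., there is no nonempty clique K ⊆ V(G) such that deleting K from G yields a graph with more connected components than G. -/
/-!
A clique cutset `K` splits `V ∖ K` into two nonempty parts with no edges between them. Since there
is no stable set of size four, one part `A` is a clique. By minimality `G − A` has, for the given
weight, a partition into a perfect part `P` and a part `W` containing no clique of `G − A` of
maximum weight. Then `(P ∪ A, W)` is a partition of the required kind for `G`, provided that
`P ∪ A` still induces a perfect graph.

That is the content of `exists_extend_coloring`: a `k`-colouring of a set `S` extends to a clique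
`A` whose outside neighbours form a clique, as long as every clique of `S ∪ A` has size at most `k`.
The colours of `A` are a system of distinct representatives for the lists of colours not used on
the neighbours. Hall's condition holds because a nonempty `T ⊆ A` together with its common
neighbours in `S` is a clique, and only the colours of these common neighbours are missing from
every list.
-/

open SimpleGraph

/-! ### Clique numbers of vertex sets -/

section CliqueNumbers

variable {V : Type*} [Finite V] (G : SimpleGraph V)

lemma cliqueNumOn_bddAbove (s : Set V) :
    BddAbove {n | ∃ t : Finset V, ↑t ⊆ s ∧ G.IsNClique n t} := by
  have := Fintype.ofFinite V
  refine ⟨Fintype.card V, ?_⟩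
  rintro n ⟨t, -, ht⟩
  rw [← ht.card_eq]
  exact Finset.card_le_univ t

lemma card_le_cliqueNumOn {s : Set V} {t : Finset V} (hts : ↑t ⊆ s)
    (ht : G.IsClique (t : Set V)) : t.card ≤ cliqueNumOn G s :=
  le_csSup (cliqueNumOn_bddAbove G s) ⟨t, hts, ht, rfl⟩

lemma exists_card_eq_cliqueNumOn (s : Set V) :
    ∃ t : Finset V, ↑t ⊆ s ∧ G.IsNClique (cliqueNumOn G s) t :=
  Nat.sSup_mem (s := {n | ∃ t : Finset V, (t : Set V) ⊆ s ∧ G.IsNClique n t})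
    ⟨0, ∅, by simp, by simp⟩ (cliqueNumOn_bddAbove G s)

lemma cliqueNumOn_mono {s t : Set V} (h : s ⊆ t) : cliqueNumOn G s ≤ cliqueNumOn G t := by
  obtain ⟨c, hcs, hc⟩ := exists_card_eq_cliqueNumOn G s
  rw [← hc.card_eq]
  exact card_le_cliqueNumOn G (hcs.trans h) hc.isClique

lemma wCliqueNumOn_mono (w : V → ℕ) {s t : Set V} (h : s ⊆ t) :
    wCliqueNumOn G w s ≤ wCliqueNumOn G w t := by
  have := Fintype.ofFinite V
  refine csSup_le_csSup ⟨∑ v, w v, ?_⟩ ⟨0, ∅, by simp⟩ ?_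
  · rintro n ⟨t, -, -, rfl⟩
    exact Finset.sum_le_sum_of_subset (Finset.subset_univ t)
  · rintro n ⟨c, hc, h1, h2⟩
    exact ⟨c, hc.trans h, h1, h2⟩

/-- The chromatic number is always at least the clique number, so equality amounts to
colourability. -/
lemma chromaticNumber_eq_iff (s : Set V) :
    (G.induce s).chromaticNumber = (cliqueNumOn G s : ℕ∞) ↔
      (G.induce s).Colorable (cliqueNumOn G s) := by
  rw [← chromaticNumber_le_iff_colorable]
  refine ⟨fun h => h.le, fun h => le_antisymm h ?_⟩
  rw [le_chromaticNumber_iff_colorable]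
  rintro m ⟨c⟩
  obtain ⟨t, hts, ht⟩ := exists_card_eq_cliqueNumOn G s
  have hinj : Function.Injective (fun v : t => c ⟨v, hts v.2⟩) := by
    intro u v huv
    by_contra hne
    exact c.valid (v := ⟨u, hts u.2⟩) (w := ⟨v, hts v.2⟩)
      (ht.isClique u.2 v.2 (fun h => hne (Subtype.ext h))) huv
  have := Fintype.card_le_of_injective _ hinj
  rw [← ht.card_eq]
  simpa using this

end CliqueNumbers

/-! ### Transfer along induced embeddings -/

section Transfer

variable {V U : Type*} {G : SimpleGraph V} {H : SimpleGraph U} (f : H ↪g G)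

lemma isClique_map_iff (t : Finset U) :
    G.IsClique (↑(t.map f.toEmbedding) : Set V) ↔ H.IsClique (t : Set U) := by
  simp only [Set.Pairwise, isClique_iff, Finset.coe_map, Set.forall_mem_image]
  constructor
  · intro h x hx y hy hxy
    exact f.map_adj_iff.1 (h hx hy (fun e => hxy (f.injective e)))
  · intro h x hx y hy hxy
    exact f.map_adj_iff.2 (h hx hy (fun e => hxy (by rw [e])))

/-- Finite subsets of an image are images of finite subsets. -/
lemma exists_map_eq {s : Set U} {t : Finset V} (h : ↑t ⊆ f '' s) :
    ∃ t' : Finset U, ↑t' ⊆ s ∧ t'.map f.toEmbedding = t := by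
  classical
  obtain ⟨t', h1, h2⟩ := Finset.subset_set_image_iff.1 h
  refine ⟨t', h1, ?_⟩
  rw [← h2, Finset.map_eq_image]
  rfl

lemma cliqueNumOn_image (s : Set U) : cliqueNumOn G (f '' s) = cliqueNumOn H s := by
  unfold cliqueNumOn
  congr 1
  ext n
  constructor
  · rintro ⟨t, hts, ht⟩
    obtain ⟨t', h1, rfl⟩ := exists_map_eq f hts
    exact ⟨t', h1, (isClique_map_iff f t').1 ht.isClique, by simpa using ht.card_eq⟩
  · rintro ⟨t, hts, ht⟩
    refine ⟨t.map f.toEmbedding, ?_, (isClique_map_iff f t).2 ht.isClique,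
      by simpa using ht.card_eq⟩
    rw [Finset.coe_map]
    exact Set.image_mono hts

lemma wCliqueNumOn_image (w : V → ℕ) (s : Set U) :
    wCliqueNumOn G w (f '' s) = wCliqueNumOn H (fun u => w (f u)) s := by
  unfold wCliqueNumOn
  congr 1
  ext n
  constructor
  · rintro ⟨t, hts, ht, hn⟩
    obtain ⟨t', h1, rfl⟩ := exists_map_eq f hts
    exact ⟨t', h1, (isClique_map_iff f t').1 ht, by simpa using hn⟩
  · rintro ⟨t, hts, ht, hn⟩
    refine ⟨t.map f.toEmbedding, ?_, (isClique_map_iff f t).2 ht, by simpa using hn⟩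
    rw [Finset.coe_map]
    exact Set.image_mono hts

lemma colorable_induce_image_iff (s : Set U) (n : ℕ) :
    (G.induce (f '' s)).Colorable n ↔ (H.induce s).Colorable n := by
  constructor
  · rintro ⟨c⟩
    exact ⟨Coloring.mk (fun u => c ⟨f u, u, u.2, rfl⟩)
      (fun {u v} huv => c.valid (f.map_adj_iff.2 huv : G.Adj (f u) (f v)))⟩
  · rintro ⟨c⟩
    choose g hg hfg using fun v : f '' s => v.2
    refine ⟨Coloring.mk (fun v => c ⟨g v, hg v⟩) (fun {u v} huv => c.valid ?_)⟩
    have : G.Adj (f (g u)) (f (g v)) := by rw [hfg, hfg]; exact huv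
    exact f.map_adj_iff.1 this

/-- Perfection of `H` read off inside a graph containing a copy of `H`. -/
lemma isPerfect_iff_of_embedding [Finite V] :
    IsPerfect H ↔
      ∀ s : Set V, s ⊆ Set.range f → (G.induce s).Colorable (cliqueNumOn G s) := by
  have : Finite U := Finite.of_injective f f.injective
  constructor
  · intro h s hs
    obtain ⟨t, rfl⟩ := Set.subset_range_iff_exists_image_eq.1 hs
    rw [colorable_induce_image_iff, cliqueNumOn_image]
    exact (chromaticNumber_eq_iff H t).1 (h t)
  · intro h t
    have := h (f '' t) (Set.image_subset_range f t)
    rw [colorable_induce_image_iff, cliqueNumOn_image] at this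
    exact (chromaticNumber_eq_iff H t).2 this

lemma isPerfect_induce_iff_s18 [Finite V] (P : Set V) :
    IsPerfect (G.induce P) ↔
      ∀ s : Set V, s ⊆ P → (G.induce s).Colorable (cliqueNumOn G s) := by
  rw [isPerfect_iff_of_embedding (Embedding.induce P)]
  have : Set.range (Embedding.induce (G := G) P) = P := Subtype.range_coe
  rw [this]

end Transfer

/-! ### Extending a colouring to a clique -/

open Classical in
lemma exists_extend_coloring {V : Type*} [Fintype V] {G : SimpleGraph V} {S A : Set V} {k : ℕ}
    (hA : G.IsClique A) (hN : G.IsClique {x | x ∈ S ∧ ∃ a ∈ A, G.Adj a x})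
    (hdisj : Disjoint A S) (hcol : (G.induce S).Colorable k)
    (hk : ∀ t : Finset V, ↑t ⊆ S ∪ A → G.IsClique (t : Set V) → t.card ≤ k) :
    (G.induce (S ∪ A)).Colorable k := by
  obtain ⟨c⟩ := hcol
  -- The list of colours available at `a`.
  let L : A → Finset (Fin k) := fun a =>
    Finset.univ.filter (fun i => ∀ x : S, G.Adj a x → c x ≠ i)
  obtain ⟨g, hginj, hgL⟩ : ∃ g : A → Fin k, Function.Injective g ∧ ∀ a, g a ∈ L a := by
    rw [← Finset.all_card_le_biUnion_card_iff_exists_injective]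
    intro T
    rcases T.eq_empty_or_nonempty with rfl | ⟨a₀, ha₀⟩
    · simp
    -- The common neighbours of `T` in `S`.
    let C : Finset S := Finset.univ.filter (fun x => ∀ a ∈ T, G.Adj a x)
    have hCN : ∀ x ∈ C, ∀ y ∈ C, x ≠ y → G.Adj x y := by
      intro x hx y hy hxy
      refine hN ⟨x.2, a₀, a₀.2, (Finset.mem_filter.1 hx).2 _ ha₀⟩
        ⟨y.2, a₀, a₀.2, (Finset.mem_filter.1 hy).2 _ ha₀⟩ (fun h => hxy (Subtype.ext h))
    have hmissing : (T.biUnion L)ᶜ ⊆ C.image c := by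
      intro i hi
      have hi' : ∀ a ∈ T, ∃ x : S, G.Adj a x ∧ c x = i := by
        intro a ha
        by_contra hcon
        push Not at hcon
        refine Finset.mem_compl.1 hi (Finset.mem_biUnion.2 ⟨a, ha, ?_⟩)
        exact Finset.mem_filter.2 ⟨Finset.mem_univ _, hcon⟩
      obtain ⟨x, hx, hxi⟩ := hi' a₀ ha₀
      refine Finset.mem_image.2 ⟨x, Finset.mem_filter.2 ⟨Finset.mem_univ _, ?_⟩, hxi⟩
      -- Neighbours of `A` in `S` form a clique, so colour `i` occurs on only one of them.
      intro a ha
      obtain ⟨y, hy, hyi⟩ := hi' a ha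
      have : x = y := by
        by_contra hne
        exact c.valid (v := x) (w := y)
          (hN ⟨x.2, a₀, a₀.2, hx⟩ ⟨y.2, a, a.2, hy⟩ (fun h => hne (Subtype.ext h)))
          (hxi.trans hyi.symm)
      rwa [this]
    have hTC : T.card + C.card ≤ k := by
      have hd : Disjoint (T.map (Function.Embedding.subtype _))
          (C.map (Function.Embedding.subtype _)) := by
        rw [Finset.disjoint_left]
        intro v hv hv'
        obtain ⟨a, -, rfl⟩ := Finset.mem_map.1 hv
        obtain ⟨x, -, hx⟩ := Finset.mem_map.1 hv'
        exact Set.disjoint_left.1 hdisj a.2 (by rw [← show (x : V) = a from hx]; exact x.2)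
      have := hk (T.map (Function.Embedding.subtype _) ∪ C.map (Function.Embedding.subtype _))
        ?_ ?_
      · rwa [Finset.card_union_of_disjoint hd, Finset.card_map, Finset.card_map] at this
      · intro v hv
        rcases Finset.mem_union.1 hv with hv | hv
        · obtain ⟨a, -, rfl⟩ := Finset.mem_map.1 hv
          exact Or.inr a.2
        · obtain ⟨a, -, rfl⟩ := Finset.mem_map.1 hv
          exact Or.inl a.2
      · intro u hu v hv huv
        rcases Finset.mem_union.1 hu with hu | hu <;> rcases Finset.mem_union.1 hv with hv | hv <;>
          obtain ⟨x, hx, rfl⟩ := Finset.mem_map.1 hu <;>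
          obtain ⟨y, hy, rfl⟩ := Finset.mem_map.1 hv
        · exact hA x.2 y.2 huv
        · exact (Finset.mem_filter.1 hy).2 x hx
        · exact ((Finset.mem_filter.1 hx).2 y hy).symm
        · exact hCN x hx y hy (fun h => huv (by rw [h]))
    have h1 := Finset.card_le_card hmissing
    have h2 := Finset.card_image_le (s := C) (f := c)
    have h3 := Finset.card_add_card_compl (T.biUnion L)
    rw [Fintype.card_fin] at h3
    omega
  have hS : ∀ v : ↑(S ∪ A), v.1 ∉ A → v.1 ∈ S := fun v hv => v.2.resolve_right hv
  have hLg : ∀ (a : A) (x : S), G.Adj a x → c x ≠ g a :=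
    fun a => (Finset.mem_filter.1 (hgL a)).2
  refine ⟨Coloring.mk
    (fun v => if h : v.1 ∈ A then g ⟨v.1, h⟩ else c ⟨v.1, hS v h⟩) ?_⟩
  intro u v huv
  have huv' : G.Adj u.1 v.1 := huv
  by_cases hu : u.1 ∈ A <;> by_cases hv : v.1 ∈ A <;> simp only [hu, hv, dif_pos, dif_neg,
    not_false_eq_true]
  · intro h
    exact huv'.ne (congrArg (fun a : A => (a : V)) (hginj h))
  · exact (hLg ⟨u, hu⟩ ⟨v, hS v hv⟩ huv').symm
  · exact hLg ⟨v, hv⟩ ⟨u, hS u hu⟩ huv'.symm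
  · exact c.valid (v := ⟨u.1, hS u hu⟩) (w := ⟨v.1, hS v hv⟩) huv'

/-- Adding a clique `A` to a perfect `P` keeps perfection if the neighbours of `A` in `P` form a
clique: this combines perfection of complements of bipartite graphs with gluing along a clique. -/
lemma isPerfect_union_clique {V : Type*} [Fintype V] {G : SimpleGraph V} {P A : Set V}
    (hP : IsPerfect (G.induce P)) (hA : G.IsClique A)
    (hN : G.IsClique {x | x ∈ P ∧ ∃ a ∈ A, G.Adj a x}) (hdisj : Disjoint A P) :
    IsPerfect (G.induce (P ∪ A)) := by
  rw [isPerfect_induce_iff_s18] at hP ⊢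
  intro s hs
  have hsplit : s = (s ∩ P) ∪ (s ∩ A) := by
    rw [← Set.inter_union_distrib_left, Set.inter_eq_left.2 hs]
  have hcol : (G.induce (s ∩ P)).Colorable (cliqueNumOn G s) :=
    (hP (s ∩ P) Set.inter_subset_right).mono (cliqueNumOn_mono G Set.inter_subset_left)
  have hmain := exists_extend_coloring (G := G) (S := s ∩ P) (A := s ∩ A)
    (k := cliqueNumOn G s) (hA.subset Set.inter_subset_right)
    (hN.subset ?_) (hdisj.mono Set.inter_subset_right Set.inter_subset_right) hcol ?_
  · rwa [← hsplit] at hmain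
  · rintro x ⟨hx, a, ha, hax⟩
    exact ⟨hx.2, a, ha.2, hax⟩
  · intro t ht htc
    rw [← hsplit] at ht
    exact card_le_cliqueNumOn G ht htc

/-! ### Clique cutsets -/

/-- Perfect weight divisibility of the induced subgraph on `s`, expressed inside `G`. -/
lemma exists_partition_of_induce {V : Type*} [Finite V] {G : SimpleGraph V} {s : Set V}
    (h : PerfectlyWeightDivisible (G.induce s)) (hs : s.Nonempty) (w : V → ℕ)
    (hw : ∀ v, 0 < w v) :
    ∃ P W : Set V, P ∪ W = s ∧ P ∩ W = ∅ ∧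
      IsPerfect (G.induce P) ∧ wCliqueNumOn G w W < wCliqueNumOn G w s := by
  let f : G.induce s ↪g G := Embedding.induce s
  have hr : f '' Set.univ = s := by
    rw [Set.image_univ]
    exact Subtype.range_coe
  obtain ⟨P, W, hu, hi, hP, hlt⟩ := h (fun v => w v) (fun v => hw v) Set.univ
    (by have := hs.to_subtype; exact Set.univ_nonempty)
  refine ⟨f '' P, f '' W, ?_, ?_, ?_, ?_⟩
  · rw [← Set.image_union, hu, hr]
  · rw [← Set.image_inter f.injective, hi, Set.image_empty]
  · rw [isPerfect_iff_of_embedding (f.comp (Embedding.induce P))] at hP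
    rw [isPerfect_induce_iff_s18]
    intro t ht
    refine hP t (ht.trans ?_)
    rintro _ ⟨x, hx, rfl⟩
    exact ⟨⟨x, hx⟩, rfl⟩
  · have h1 := wCliqueNumOn_image f w W
    have h2 := wCliqueNumOn_image f w Set.univ
    rw [hr] at h2
    rw [h1, h2]
    exact hlt

/-- In an MNWD graph no nonempty clique has all its outside neighbours in another nonempty
disjoint clique. -/
lemma MNWD.false_of_clique_attached_to_clique {V : Type*} [Fintype V] {G : SimpleGraph V}
    (h : MNWD G) {A K : Set V} (hA : G.IsClique A) (hK : G.IsClique K) (hAne : A.Nonempty)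
    (hKne : K.Nonempty) (hAK : Disjoint A K)
    (hnbr : ∀ a ∈ A, ∀ x, G.Adj a x → x ∈ A ∨ x ∈ K) : False := by
  apply h.1
  intro w hw s hs
  by_cases hsu : s = Set.univ
  · subst hsu
    have hne : Aᶜ ≠ Set.univ := by
      rw [Ne, Set.compl_univ_iff]
      exact hAne.ne_empty
    obtain ⟨P, W, hu, hi, hP, hlt⟩ := exists_partition_of_induce (h.2 Aᶜ hne)
      (hKne.mono (Set.disjoint_left.1 hAK.symm)) w hw
    have hPA : Disjoint A P := by
      rw [Set.disjoint_left]
      intro a ha haP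
      exact (hu ▸ Or.inl haP : a ∈ Aᶜ) ha
    have hWA : ∀ x ∈ W, x ∉ A := fun x hx => (hu ▸ Or.inr hx : x ∈ Aᶜ)
    refine ⟨P ∪ A, W, ?_, ?_, isPerfect_union_clique hP hA (hK.subset ?_) hPA,
      hlt.trans_le (wCliqueNumOn_mono G w (Set.subset_univ _))⟩
    · rw [Set.union_right_comm, hu, Set.compl_union_self]
    · rw [Set.union_inter_distrib_right, hi, Set.empty_union]
      exact Set.eq_empty_of_forall_notMem fun x hx => hWA x hx.2 hx.1
    · rintro x ⟨hxP, a, ha, hax⟩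
      exact (hnbr a ha x hax).resolve_left fun hxA => Set.disjoint_left.1 hPA hxA hxP
  · exact exists_partition_of_induce (h.2 s hsu) hs w hw

/-- Without a stable set of size four, one of two anticomplete sets is a clique. -/
lemma isClique_or_isClique_of_fourKOne_free {V : Type*} {G : SimpleGraph V}
    (h : IsFree G (⊥ : SimpleGraph (Fin 4))) {A B : Set V} (hAB : Disjoint A B)
    (hanti : ∀ a ∈ A, ∀ b ∈ B, ¬ G.Adj a b) : G.IsClique A ∨ G.IsClique B := by
  by_contra hcon
  simp only [not_or, isClique_iff, Set.Pairwise] at hcon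
  push Not at hcon
  obtain ⟨⟨a, ha, a', ha', haa, hna⟩, b, hb, b', hb', hbb, hnb⟩ := hcon
  have hne : ∀ x ∈ A, ∀ y ∈ B, x ≠ y := fun x hx y hy e =>
    Set.disjoint_left.1 hAB hx (e ▸ hy)
  have n1 := hne a ha b hb
  have n2 := hne a ha b' hb'
  have n3 := hne a' ha' b hb
  have n4 := hne a' ha' b' hb'
  have k1 := n1.symm
  have k2 := n2.symm
  have k3 := n3.symm
  have k4 := n4.symm
  have m1 := hanti a ha b hb
  have m2 := hanti a ha b' hb'
  have m3 := hanti a' ha' b hb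
  have m4 := hanti a' ha' b' hb'
  refine h ⟨⟨![a, a', b, b'], ?_⟩, ?_⟩
  · clear h hAB hanti hne
    intro i j hij
    fin_cases i <;> fin_cases j <;> simp_all
  · clear h hAB hanti hne
    intro i j
    change G.Adj (![a, a', b, b'] i) (![a, a', b, b'] j) ↔ False
    fin_cases i <;> fin_cases j <;> simp [hna, hnb, m1, m2, m3, m4, mt Adj.symm hna, mt Adj.symm hnb,
      mt Adj.symm m1, mt Adj.symm m2, mt Adj.symm m3, mt Adj.symm m4]

/-- A 4K₁-free minimally non-perfectly weight divisible graph has no clique cutset: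
there is no nonempty clique `K` whose deletion yields a graph with more connected
components than `G`. -/
theorem fourKOne_free_MNWD_no_clique_cutset {V : Type*} [Fintype V] (G : SimpleGraph V)
    (h4K1 : IsFree G (⊥ : SimpleGraph (Fin 4))) (hmnwd : MNWD G) :
    ¬ ∃ K : Set V, K.Nonempty ∧ G.IsClique K ∧
        Nat.card G.ConnectedComponent < Nat.card (G.induce Kᶜ).ConnectedComponent := by
  rintro ⟨K, hKne, hK, hcard⟩
  obtain ⟨k₀, hk₀⟩ := hKne
  have hpos : 0 < Nat.card G.ConnectedComponent := by
    have : Nonempty G.ConnectedComponent := ⟨G.connectedComponentMk k₀⟩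
    exact Nat.card_pos
  obtain ⟨c, c', hcc⟩ : ∃ c c' : (G.induce Kᶜ).ConnectedComponent, c ≠ c' := by
    have := Finite.one_lt_card_iff_nontrivial.1 (lt_of_le_of_lt hpos hcard)
    exact exists_pair_ne _
  -- One component of `G − K`, and the union of the others.
  let A : Set V := {v | ∃ h : v ∈ Kᶜ, (G.induce Kᶜ).connectedComponentMk ⟨v, h⟩ = c}
  let B : Set V := {v | ∃ h : v ∈ Kᶜ, (G.induce Kᶜ).connectedComponentMk ⟨v, h⟩ ≠ c}
  have hAne : A.Nonempty := by
    obtain ⟨v, hv⟩ := c.exists_rep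
    exact ⟨v.1, v.2, hv⟩
  have hBne : B.Nonempty := by
    obtain ⟨v, hv⟩ := c'.exists_rep
    exact ⟨v.1, v.2, fun h => hcc (h.symm.trans hv)⟩
  have hAB : Disjoint A B := by
    rw [Set.disjoint_left]
    rintro v ⟨h, h1⟩ ⟨h', h2⟩
    exact h2 h1
  have hanti : ∀ a ∈ A, ∀ b ∈ B, ¬ G.Adj a b := by
    rintro a ⟨ha, hac⟩ b ⟨hb, hbc⟩ hab
    apply hbc
    rw [← hac]
    have : (G.induce Kᶜ).Adj ⟨b, hb⟩ ⟨a, ha⟩ := hab.symm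
    exact ConnectedComponent.sound this.reachable
  have hcover : ∀ v, v ∈ A ∨ v ∈ B ∨ v ∈ K := by
    intro v
    by_cases hv : v ∈ K
    · exact Or.inr (Or.inr hv)
    · by_cases hvc : (G.induce Kᶜ).connectedComponentMk ⟨v, hv⟩ = c
      · exact Or.inl ⟨hv, hvc⟩
      · exact Or.inr (Or.inl ⟨hv, hvc⟩)
  have hAK : Disjoint A K := Set.disjoint_left.2 fun v hv => hv.1
  have hBK : Disjoint B K := Set.disjoint_left.2 fun v hv => hv.1
  rcases isClique_or_isClique_of_fourKOne_free h4K1 hAB hanti with hc | hc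
  · refine hmnwd.false_of_clique_attached_to_clique hc hK hAne ⟨k₀, hk₀⟩ hAK ?_
    intro a ha x hax
    have := hanti a ha x
    have := hcover x
    tauto
  · refine hmnwd.false_of_clique_attached_to_clique hc hK hBne ⟨k₀, hk₀⟩ hBK ?_
    intro b hb x hbx
    have h1 := fun hx => hanti x hx b hb hbx.symm
    have := hcover x
    tauto
end
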